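/- For all integers n ≥ 1 and g ≥ 1, the Lusternik–Schnirelmann category of the n-th symmetric product of the closed non-orientable surface of genus g is cat(SP^n(N_g)) = 2n. -/

import Mathlib

open scoped unitInterval Topology
open MeasureTheory
noncomputable section

/-- The `n`-th symmetric product relation on `X^n`: two tuples are related iff they
differ by a permutation of coordinates. -/
def spRel (n : ℕ) (X : Type*) (s t : Fin n → X) : Prop :=
  ∃ e : Equiv.Perm (Fin n), s ∘ e = t

/-- The `n`-th symmetric product of a topological space `X`: the quotient of the
product space `X^n` by the permutation action of the symmetric group `S_n`,
equipped with the quotient topology. -/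
def SP (n : ℕ) (X : Type*) [TopologicalSpace X] : Type _ :=
  Quot (spRel n X)

instance (n : ℕ) (X : Type*) [TopologicalSpace X] : TopologicalSpace (SP n X) :=
  inferInstanceAs (TopologicalSpace (Quot (spRel n X)))

/-- The inclusion of a subset, as a continuous map. -/
def inclMap {X : Type*} [TopologicalSpace X] (U : Set X) : C(U, X) :=
  ⟨Subtype.val, continuous_subtype_val⟩

/-- `catLE X r` : `X` is covered by `r+1` open sets, each of whose inclusion maps
into `X` is null-homotopic. -/
def catLE (X : Type*) [TopologicalSpace X] (r : ℕ) : Prop :=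
  ∃ U : Fin (r + 1) → Set X, (∀ i, IsOpen (U i)) ∧ (⋃ i, U i) = Set.univ ∧
    ∀ i, (inclMap (U i)).Nullhomotopic

/-- The Lusternik–Schnirelmann category of `X`, valued in `ℕ∞`. -/
def LScat (X : Type*) [TopologicalSpace X] : ℕ∞ :=
  sInf {c : ℕ∞ | ∃ r : ℕ, catLE X r ∧ c = r}

/-- The closed unit disc (a topological model for a polygon). -/
abbrev Disc : Type := {z : ℂ // ‖z‖ ≤ 1}

/-- The point at parameter `t ∈ [0,1]` on the `k`-th of the `N` boundary edges of an
`N`-gon, realized as the closed unit disc whose boundary circle is divided into `N` arcs. -/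
def polyBP (N k : ℕ) (t : ℝ) : ℂ :=
  Complex.exp (2 * Real.pi * Complex.I * (((k : ℝ) + t) / (N : ℝ)))

/-- Boundary identifications of the `2g`-gon for the edge word `e₁²e₂²⋯e_g²` :
the point at parameter `t` on edge `2j` is glued to the point at parameter `t`
on edge `2j+1`. -/
def nonorientRel (g : ℕ) (z w : Disc) : Prop :=
  ∃ j : Fin g, ∃ t : ℝ, 0 ≤ t ∧ t ≤ 1 ∧
    (z : ℂ) = polyBP (2 * g) (2 * (j : ℕ)) t ∧
    (w : ℂ) = polyBP (2 * g) (2 * (j : ℕ) + 1) t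

/-- The closed non-orientable surface of genus `g ≥ 1` : the quotient of the `2g`-gon
by the boundary edge word `e₁²e₂²⋯e_g²`. -/
def Ng (g : ℕ) : Type := Quot (nonorientRel g)

instance (g : ℕ) : TopologicalSpace (Ng g) :=
  inferInstanceAs (TopologicalSpace (Quot (nonorientRel g)))

/-!
Collapsing all pairs of edges of the polygon but the first maps `N_g` to `ℝP²`, the projective space
of real polynomials of degree at most two. Multiplying the `n` polynomials so obtained maps
`SPⁿ(N_g)` to the projective space of polynomials of degree at most `2n`, and the choice of a sign
of the product is a double covering of `SPⁿ(N_g)`.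

Lower bound. The double covering is trivial over a categorical set, so a categorical cover by
`r + 1` sets gives its points labels `±i` with `i ≤ r`, opposite signs of the product getting
opposite labels. The cube `I²ⁿ`, parametrising `SPⁿ(N_g)` in polar coordinates, lifts to the
double covering, and the labels pull back to the Kuhn triangulation of a fine grid. The faces of
its boundary are glued in pairs, and the label changes sign only across the first pair of edges.
Counting modulo two the simplices whose labels increase in absolute value and alternate in sign, as
in Ky Fan's lemma, produces one with `2n + 1` labels of different absolute values, so `2n ≤ r`.

Upper bound. The surface carries two functions such that, wherever neither takes the value
`t ∈ (0, 1)`, the set of those exceeding `t` selects one of three open sets contractible in the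
surface to the same point. Some `t` is avoided by all `2n` values of the two functions at a tuple of
`n` points, and the number of values exceeding `t`, from `0` to `2n`, indexes an open cover of
`SPⁿ(N_g)`. Two such `t` giving the same number are exceeded by the same functions at each point, so
the three contractions combine to a contraction of each member of this cover.
-/

/-! ### The Kuhn triangulation modulo two -/

namespace Kuhn

/-- The mod 2 coboundary of a cochain on ordered simplices; a simplex is the list of its
vertices. -/
def coboundary {α : Type*} (A : List α → ZMod 2) (l : List α) : ZMod 2 :=
  ∑ i ∈ Finset.range l.length, A (l.eraseIdx i)

section Coboundary

variable {α β : Type*}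

theorem coboundary_cons (A : List α → ZMod 2) (v : α) (l : List α) :
    coboundary A (v :: l) = A l + coboundary (fun t ↦ A (v :: t)) l := by
  simp [coboundary, Finset.sum_range_succ', add_comm]

theorem coboundary_map (A : List β → ZMod 2) (f : α → β) (l : List α) :
    coboundary (fun t ↦ A (t.map f)) l = coboundary A (l.map f) := by
  simp [coboundary, List.eraseIdx_map]

theorem coboundary_zero (l : List α) : coboundary (fun _ ↦ 0) l = 0 := by
  simp [coboundary]

theorem coboundary_eq_of_perm {A : List α → ZMod 2} (hA : ∀ s t : List α, s.Perm t → A s = A t)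
    {l m : List α} (h : l.Perm m) : coboundary A l = coboundary A m := by
  induction h generalizing A with
  | nil => rfl
  | cons x h ih =>
    rw [coboundary_cons, coboundary_cons, hA _ _ h, ih fun s t hst ↦ hA _ _ (hst.cons x)]
  | swap x y t =>
    have hswap : (fun s ↦ A (y :: x :: s)) = fun s ↦ A (x :: y :: s) :=
      funext fun s ↦ hA _ _ (.swap ..)
    simp only [coboundary_cons, hswap]
    ring
  | trans _ _ h₁ h₂ => rw [h₁ hA, h₂ hA]

end Coboundary

section Cube

variable {ι : Type*} [DecidableEq ι]

/-- The sum of a cochain over the simplices of the Kuhn triangulation of the unit cube with least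
vertex `v` and directions `S`: these simplices are the monotone edge paths from `v` to the opposite
vertex, and the recursion chooses the first edge of the path. -/
def cubeSum (S : Finset ι) (v : ι → ℕ) (A : List (ι → ℕ) → ZMod 2) : ZMod 2 :=
  if S = ∅ then A [v] else
    ∑ c : S, cubeSum (S.erase c) (v + Pi.single c.1 1) fun l ↦ A (v :: l)
termination_by S.card
decreasing_by exact Finset.card_erase_lt_of_mem c.2

theorem cubeSum_empty (v : ι → ℕ) (A : List (ι → ℕ) → ZMod 2) : cubeSum ∅ v A = A [v] := by
  rw [cubeSum, if_pos rfl]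

theorem cubeSum_of_nonempty {S : Finset ι} (hS : S.Nonempty) (v : ι → ℕ)
    (A : List (ι → ℕ) → ZMod 2) :
    cubeSum S v A = ∑ c ∈ S, cubeSum (S.erase c) (v + Pi.single c 1) fun l ↦ A (v :: l) := by
  rw [cubeSum, if_neg hS.ne_empty]
  exact Finset.sum_coe_sort S fun c ↦ cubeSum (S.erase c) (v + Pi.single c 1) fun l ↦ A (v :: l)

theorem cubeSum_add (S : Finset ι) (v : ι → ℕ) (A B : List (ι → ℕ) → ZMod 2) :
    cubeSum S v (fun l ↦ A l + B l) = cubeSum S v A + cubeSum S v B := by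
  induction S using Finset.eraseInduction generalizing v A B with
  | H S ih =>
    rcases S.eq_empty_or_nonempty with rfl | hS
    · simp only [cubeSum_empty]
    · simp only [cubeSum_of_nonempty hS, ← Finset.sum_add_distrib]
      exact Finset.sum_congr rfl fun c hc ↦ ih c hc _ _ _

theorem cubeSum_zero (S : Finset ι) (v : ι → ℕ) : cubeSum S v (fun _ ↦ 0) = 0 := by
  simpa using cubeSum_add S v (fun _ ↦ 0) (fun _ ↦ 0)

theorem cubeSum_congr (S : Finset ι) (v : ι → ℕ) {A B : List (ι → ℕ) → ZMod 2}
    (h : ∀ l : List (ι → ℕ), l.length = S.card + 1 → v ∈ l →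
      (∀ w ∈ l, ∀ c, v c ≤ w c ∧ w c ≤ v c + if c ∈ S then 1 else 0) → A l = B l) :
    cubeSum S v A = cubeSum S v B := by
  induction S using Finset.eraseInduction generalizing v A B with
  | H S ih =>
    rcases S.eq_empty_or_nonempty with rfl | hS
    · simpa only [cubeSum_empty] using h [v] rfl (by simp) (by simp)
    · simp only [cubeSum_of_nonempty hS]
      refine Finset.sum_congr rfl fun c hc ↦ ih c hc _ fun l hl _ hlw ↦ ?_
      refine h (v :: l) (by simp [hl, Finset.card_erase_add_one hc]) (by simp) fun w hw d ↦ ?_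
      rcases List.mem_cons.mp hw with rfl | hw
      · simp
      · have := hlw w hw d
        by_cases hd : d = c
        · subst hd
          simp [hc] at this ⊢
          omega
        · simpa [hd] using this

theorem cubeSum_map (ρ : Equiv.Perm ι) (τ : (ι → ℕ) → ι → ℕ)
    (hτ : ∀ v c, τ (v + Pi.single c 1) = τ v + Pi.single (ρ c) 1) (S : Finset ι) (v : ι → ℕ)
    (A : List (ι → ℕ) → ZMod 2) :
    cubeSum (S.map ρ.toEmbedding) (τ v) A = cubeSum S v (fun l ↦ A (l.map τ)) := by
  induction S using Finset.eraseInduction generalizing v A with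
  | H S ih =>
    rcases S.eq_empty_or_nonempty with rfl | hS
    · simp [cubeSum_empty]
    · simp only [cubeSum_of_nonempty hS, cubeSum_of_nonempty (hS.map (f := ρ.toEmbedding)),
        Finset.sum_map, ← Finset.map_erase]
      refine Finset.sum_congr rfl fun c hc ↦ ?_
      rw [Equiv.coe_toEmbedding, ← hτ]
      exact ih c hc (v + Pi.single c 1) fun l ↦ A (τ v :: l)

theorem cubeSum_translate (S : Finset ι) (v u : ι → ℕ) (A : List (ι → ℕ) → ZMod 2) :
    cubeSum S (v + u) A = cubeSum S v (fun l ↦ A (l.map (· + u))) := by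
  simpa using cubeSum_map (Equiv.refl ι) (· + u) (fun v c ↦ add_right_comm _ _ _) S v A

theorem sum_sum_erase_eq_zero_of_symmetric {S : Finset ι} {F : ι → ι → ZMod 2}
    (hF : ∀ c ∈ S, ∀ d ∈ S, F c d = F d c) : ∑ c ∈ S, ∑ d ∈ S.erase c, F c d = 0 := by
  rw [Finset.sum_sigma']
  refine Finset.sum_involution (fun x _ ↦ ⟨x.2, x.1⟩) ?_ ?_ ?_ fun _ _ ↦ rfl
  · rintro ⟨c, d⟩ h
    simp only [Finset.mem_sigma, Finset.mem_erase] at h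
    rw [hF c h.1 d h.2.2, CharTwo.add_self_eq_zero]
  · rintro ⟨c, d⟩ h _ heq
    simp only [Finset.mem_sigma, Finset.mem_erase] at h
    exact h.2.1 (Sigma.mk.inj heq).1
  · rintro ⟨c, d⟩ h
    simp only [Finset.mem_sigma, Finset.mem_erase] at h ⊢
    exact ⟨h.2.2, Ne.symm h.2.1, h.1⟩

theorem cubeSum_coboundary {S : Finset ι} (hS : S.Nonempty) (v : ι → ℕ)
    (A : List (ι → ℕ) → ZMod 2) :
    cubeSum S v (coboundary A) =
      ∑ c ∈ S, (cubeSum (S.erase c) (v + Pi.single c 1) A + cubeSum (S.erase c) v A) := by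
  induction S using Finset.eraseInduction generalizing v A with
  | H S ih =>
    obtain ⟨c, rfl⟩ | hS' := hS.exists_eq_singleton_or_nontrivial
    · simp [cubeSum_of_nonempty, cubeSum_empty, coboundary, Finset.sum_range_succ]
    have hne (c : ι) : (S.erase c).Nonempty := hS'.erase_nonempty
    -- Faces missing two directions occur twice and cancel; the others are the faces through `v`.
    have hinner : ∑ c ∈ S, cubeSum (S.erase c) (v + Pi.single c 1)
        (coboundary fun t ↦ A (v :: t)) = ∑ c ∈ S, cubeSum (S.erase c) v A :=
      calc
        _ = ∑ c ∈ S, ∑ d ∈ S.erase c,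
              (cubeSum ((S.erase c).erase d) (v + Pi.single c 1 + Pi.single d 1)
                (fun t ↦ A (v :: t)) +
              cubeSum ((S.erase c).erase d) (v + Pi.single c 1) fun t ↦ A (v :: t)) :=
          Finset.sum_congr rfl fun c hc ↦ ih c hc (hne c) _ _
        _ = ∑ c ∈ S, ∑ d ∈ S.erase c,
              cubeSum ((S.erase c).erase d) (v + Pi.single c 1) fun t ↦ A (v :: t) := by
          simp only [Finset.sum_add_distrib, add_eq_right]
          refine sum_sum_erase_eq_zero_of_symmetric fun c _ d _ ↦ ?_
          rw [Finset.erase_right_comm, add_right_comm]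
        _ = ∑ d ∈ S, ∑ c ∈ S.erase d,
              cubeSum ((S.erase d).erase c) (v + Pi.single c 1) fun t ↦ A (v :: t) := by
          rw [Finset.sum_comm' (t' := S) (s' := S.erase) (by simp only [Finset.mem_erase]; tauto)]
          simp only [Finset.erase_right_comm]
        _ = ∑ d ∈ S, cubeSum (S.erase d) v A :=
          Finset.sum_congr rfl fun d _ ↦ (cubeSum_of_nonempty (hne d) v A).symm
    have hcons : (fun l ↦ coboundary A (v :: l)) =
        fun l ↦ A l + coboundary (fun t ↦ A (v :: t)) l := funext fun l ↦ coboundary_cons A v l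
    rw [cubeSum_of_nonempty hS]
    simp only [hcons, cubeSum_add, Finset.sum_add_distrib, hinner]

theorem cubeSum_eq_zero_of_degenerate {c : ι} {S : Finset ι} (hc : c ∈ S) (v : ι → ℕ)
    {A : List (ι → ℕ) → ZMod 2} (hA : ∀ l, ∀ w ∈ l, w + Pi.single c 1 ∈ l → A l = 0) :
    cubeSum S v A = 0 := by
  induction S using Finset.eraseInduction generalizing v A with
  | H S ih =>
    rw [cubeSum_of_nonempty ⟨c, hc⟩]
    refine Finset.sum_eq_zero fun e he ↦ ?_
    by_cases hec : e = c
    · subst hec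
      rw [← cubeSum_zero (S.erase e) (v + Pi.single e 1)]
      exact cubeSum_congr _ _ fun l _ hl _ ↦ hA (v :: l) v (by simp) (by simp [hl])
    · refine ih e he (by simp [hc, Ne.symm hec]) _ fun l w hw hw' ↦ ?_
      exact hA (v :: l) w (by simp [hw]) (by simp [hw'])

theorem add_single_comp_swap (c d : ι) (v : ι → ℕ) (e : ι) :
    (v + Pi.single e 1) ∘ Equiv.swap c d =
      v ∘ Equiv.swap c d + Pi.single (Equiv.swap c d e) 1 := by
  rw [Pi.add_comp, Pi.single_comp_equiv, Equiv.symm_swap]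

theorem map_swap_of_mem {c d : ι} {S : Finset ι} (hc : c ∈ S) (hd : d ∈ S) :
    S.map (Equiv.swap c d).toEmbedding = S := by
  refine Finset.eq_of_subset_of_card_le (fun x hx ↦ ?_) (by simp)
  obtain ⟨y, hy, rfl⟩ := Finset.mem_map.mp hx
  rw [Equiv.coe_toEmbedding, Equiv.swap_apply_def]
  split_ifs <;> assumption

theorem cubeSum_comp_swap {c d : ι} {S : Finset ι} (hc : c ∈ S) (hd : d ∈ S) (v : ι → ℕ)
    (A : List (ι → ℕ) → ZMod 2) :
    cubeSum S (v ∘ Equiv.swap c d) A = cubeSum S v fun l ↦ A (l.map (· ∘ Equiv.swap c d)) := by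
  simpa only [map_swap_of_mem hc hd] using
    cubeSum_map (Equiv.swap c d) (· ∘ Equiv.swap c d) (add_single_comp_swap c d) S v A

theorem cubeSum_eq_zero_of_swap {c d : ι} (hcd : c ≠ d) {S : Finset ι} (hc : c ∈ S) (hd : d ∈ S)
    {v : ι → ℕ} (hv : v ∘ Equiv.swap c d = v) {A : List (ι → ℕ) → ZMod 2}
    (hA : ∀ l, A (l.map (· ∘ Equiv.swap c d)) = A l) : cubeSum S v A = 0 := by
  induction S using Finset.eraseInduction generalizing v A with
  | H S ih =>
    have hA' (l) : A (v :: l.map (· ∘ Equiv.swap c d)) = A (v :: l) := by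
      simpa [hv] using hA (v :: l)
    have hpair : cubeSum (S.erase d) (v + Pi.single d 1) (fun l ↦ A (v :: l)) =
        cubeSum (S.erase c) (v + Pi.single c 1) fun l ↦ A (v :: l) := by
      have hcv : v + Pi.single d 1 = (v + Pi.single c 1) ∘ Equiv.swap c d := by
        rw [add_single_comp_swap, hv, Equiv.swap_apply_left]
      have hcS : S.erase d = (S.erase c).map (Equiv.swap c d).toEmbedding := by
        rw [Finset.map_erase, map_swap_of_mem hc hd, Equiv.coe_toEmbedding, Equiv.swap_apply_left]
      rw [hcv, hcS, cubeSum_map _ (· ∘ Equiv.swap c d) (add_single_comp_swap c d)]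
      simp only [hA']
    have hrest : ∑ e ∈ (S.erase c).erase d,
        cubeSum (S.erase e) (v + Pi.single e 1) (fun l ↦ A (v :: l)) = 0 := by
      refine Finset.sum_eq_zero fun e he ↦ ?_
      simp only [Finset.mem_erase] at he
      refine ih e he.2.2 (by simp [hc, he.2.1.symm]) (by simp [hd, he.1.symm]) ?_ hA'
      rw [add_single_comp_swap, hv, Equiv.swap_apply_of_ne_of_ne he.2.1 he.1]
    rw [cubeSum_of_nonempty ⟨c, hc⟩, ← Finset.add_sum_erase S _ hc,
      ← Finset.add_sum_erase (S.erase c) _ (Finset.mem_erase.mpr ⟨hcd.symm, hd⟩), hrest, hpair,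
      add_zero, CharTwo.add_self_eq_zero]

end Cube

section Box

variable {ι : Type*} [DecidableEq ι]

theorem update_zero_add_single (q : ι → ℕ) (c : ι) (x : ℕ) :
    Function.update q c 0 + Pi.single c x = Function.update q c x := by
  ext d
  by_cases hd : d = c
  · subst hd
    simp
  · simp [hd]

variable [Fintype ι] {S : Finset ι} {q : ι → ℕ} {c d : ι}

/-- The least vertices of the unit cubes of the box in which the coordinates in `S` range over
`[0, q c]` and every other coordinate is fixed at `q c`. -/
def boxBase (S : Finset ι) (q : ι → ℕ) : Finset (ι → ℕ) :=
  Fintype.piFinset fun c ↦ if c ∈ S then Finset.range (q c) else {q c}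

theorem mem_boxBase {v : ι → ℕ} :
    v ∈ boxBase S q ↔ ∀ c, if c ∈ S then v c < q c else v c = q c := by
  refine Fintype.mem_piFinset.trans (forall_congr' fun c ↦ ?_)
  split_ifs <;> simp

theorem boxBase_add {u : ι → ℕ} (hu : ∀ c ∈ S, u c = 0) :
    boxBase S (q + u) = (boxBase S q).map (addRightEmbedding u) := by
  ext v
  simp only [Finset.mem_map, mem_boxBase, addRightEmbedding_apply, Pi.add_apply]
  constructor
  · intro h
    have hle : u ≤ v := fun c ↦ by
      have := h c
      split_ifs at this with hc
      · simp [hu c hc]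
      · exact this ▸ Nat.le_add_left _ _
    refine ⟨v - u, fun c ↦ ?_, tsub_add_cancel_of_le hle⟩
    have := h c
    split_ifs at this ⊢ with hc
    · simpa [hu c hc] using this
    · simp [this]
  · rintro ⟨w, hw, rfl⟩ c
    have := hw c
    split_ifs at this ⊢ <;> simpa using this

theorem sum_boxBase_erase (hc : c ∈ S) (f : (ι → ℕ) → ZMod 2) :
    ∑ v ∈ boxBase S q, f v = ∑ x ∈ Finset.range (q c),
      ∑ v ∈ boxBase (S.erase c) (Function.update q c 0), f (v + Pi.single c x) := by
  rw [← Finset.sum_fiberwise_of_maps_to (t := Finset.range (q c)) (g := fun v ↦ v c)]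
  · refine Finset.sum_congr rfl fun x hx ↦ ?_
    have hfiber : {v ∈ boxBase S q | v c = x} =
        boxBase (S.erase c) (Function.update q c 0 + Pi.single c x) := by
      ext v
      simp only [Finset.mem_filter, mem_boxBase, Finset.mem_erase]
      constructor
      · rintro ⟨h, rfl⟩ d
        by_cases hd : d = c
        · subst hd
          simp
        · simpa [hd] using h d
      · intro h
        have hvc : v c = x := by simpa using h c
        refine ⟨fun d ↦ ?_, hvc⟩
        by_cases hd : d = c
        · subst hd
          simpa [hc, hvc] using hx
        · simpa [hd] using h d
    rw [hfiber, boxBase_add (by simp +contextual), Finset.sum_map]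
    rfl
  · intro v hv
    simpa [hc] using mem_boxBase.mp hv c

/-- The sum of a mod 2 cochain over the Kuhn triangulation of a box, encoded as in `boxBase`. -/
def boxSum (S : Finset ι) (q : ι → ℕ) (A : List (ι → ℕ) → ZMod 2) : ZMod 2 :=
  ∑ v ∈ boxBase S q, cubeSum S v A

theorem boxSum_empty (q : ι → ℕ) (A : List (ι → ℕ) → ZMod 2) : boxSum ∅ q A = A [q] := by
  have : boxBase ∅ q = {q} := by ext v; simp [mem_boxBase, funext_iff]
  rw [boxSum, this, Finset.sum_singleton, cubeSum_empty]

theorem boxSum_add (S : Finset ι) (q : ι → ℕ) (A B : List (ι → ℕ) → ZMod 2) :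
    boxSum S q (fun l ↦ A l + B l) = boxSum S q A + boxSum S q B := by
  simp only [boxSum, cubeSum_add, Finset.sum_add_distrib]

theorem boxSum_zero (S : Finset ι) (q : ι → ℕ) : boxSum S q (fun _ ↦ 0) = 0 := by
  simp only [boxSum, cubeSum_zero, Finset.sum_const_zero]

theorem boxSum_congr {A B : List (ι → ℕ) → ZMod 2}
    (h : ∀ l : List (ι → ℕ), l.length = S.card + 1 →
      (∀ w ∈ l, ∀ c, if c ∈ S then w c ≤ q c else w c = q c) →
      (∀ u ∈ l, ∀ w ∈ l, ∀ c, u c ≤ w c + 1) → A l = B l) :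
    boxSum S q A = boxSum S q B := by
  refine Finset.sum_congr rfl fun v hv ↦ cubeSum_congr _ _ fun l hl _ hlv ↦ h l hl ?_ ?_
  · intro w hw c
    have h₁ := hlv w hw c
    have h₂ := mem_boxBase.mp hv c
    split_ifs at h₁ h₂ ⊢ <;> omega
  · intro u hu w hw c
    have h₁ := hlv w hw c
    have h₂ := hlv u hu c
    split_ifs at h₁ h₂ <;> omega

theorem boxSum_map_congr {α : Type*} {f g : (ι → ℕ) → α} (a : List α → ZMod 2)
    (h : ∀ w : ι → ℕ, (∀ c, if c ∈ S then w c ≤ q c else w c = q c) → f w = g w) :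
    boxSum S q (fun l ↦ a (l.map f)) = boxSum S q fun l ↦ a (l.map g) :=
  boxSum_congr fun _ _ hl _ ↦ congrArg a (List.map_congr_left fun w hw ↦ h w (hl w hw))

theorem boxSum_translate {u : ι → ℕ} (hu : ∀ c ∈ S, u c = 0) (A : List (ι → ℕ) → ZMod 2) :
    boxSum S (q + u) A = boxSum S q fun l ↦ A (l.map (· + u)) := by
  simp only [boxSum, boxBase_add hu, Finset.sum_map, addRightEmbedding_apply, cubeSum_translate]

theorem boxSum_coboundary (hS : S.Nonempty) (A : List (ι → ℕ) → ZMod 2) :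
    boxSum S q (coboundary A) =
      ∑ c ∈ S, (boxSum (S.erase c) q A + boxSum (S.erase c) (Function.update q c 0) A) := by
  simp only [boxSum, cubeSum_coboundary hS, Finset.sum_comm (t := S)]
  refine Finset.sum_congr rfl fun c hc ↦ ?_
  set F : ℕ → ZMod 2 := fun x ↦ ∑ v ∈ boxBase (S.erase c) (Function.update q c 0),
    cubeSum (S.erase c) (v + Pi.single c x) A with hF
  have hslice (x : ℕ) : boxSum (S.erase c) (Function.update q c x) A = F x := by
    rw [← update_zero_add_single, boxSum, boxBase_add (by simp +contextual), Finset.sum_map]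
    rfl
  calc
    _ = ∑ x ∈ Finset.range (q c), (F (x + 1) - F x) := by
      simp only [sum_boxBase_erase hc, hF, add_assoc, ← Pi.single_add, CharTwo.sub_eq_add,
        Finset.sum_add_distrib]
    _ = F (q c) + F 0 := by rw [Finset.sum_range_sub, CharTwo.sub_eq_add]
    _ = _ := by
      rw [← hslice, ← hslice, Function.update_eq_self]
      rfl

theorem boxSum_subdivide (hc : c ∈ S) {m M : ℕ} (hq : q c = m * M) (A : List (ι → ℕ) → ZMod 2) :
    boxSum S q A = ∑ i ∈ Finset.range m,
      boxSum S (Function.update q c M) fun l ↦ A (l.map (· + Pi.single c (i * M))) := by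
  have hblock (f : ℕ → ZMod 2) : ∑ x ∈ Finset.range (m * M), f x =
      ∑ i ∈ Finset.range m, ∑ x ∈ Finset.range M, f (x + i * M) := by
    clear hq
    induction m with
    | zero => simp
    | succ m ih =>
      rw [Nat.succ_mul, Finset.sum_range_add, ih, Finset.sum_range_succ]
      simp only [add_comm]
  simp only [boxSum, sum_boxBase_erase hc, hq, hblock, Function.update_self, Function.update_idem,
    ← cubeSum_translate, Pi.single_add, add_assoc]

theorem boxSum_piecewise (S : Finset ι) (q : ι → ℕ) (A : List (ι → ℕ) → ZMod 2) :
    boxSum S q (fun l ↦ A (l.map (S.piecewise · q))) = boxSum S q A := by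
  refine boxSum_congr fun l _ hl _ ↦ congrArg A ?_
  refine (List.map_congr_left fun w hw ↦ funext fun c ↦ ?_).trans (List.map_id l)
  by_cases hc : c ∈ S
  · simp [hc]
  · have hwc := hl w hw c
    rw [if_neg hc] at hwc
    simp [hc, hwc]

theorem boxSum_eq_zero_of_degenerate (hc : c ∈ S) {A : List (ι → ℕ) → ZMod 2}
    (hA : ∀ l : List (ι → ℕ), (∀ w ∈ l, ∀ e ∉ S, w e = q e) →
      ∀ w ∈ l, w + Pi.single c 1 ∈ l → A l = 0) : boxSum S q A = 0 := by
  rw [← boxSum_piecewise]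
  refine Finset.sum_eq_zero fun v _ ↦ cubeSum_eq_zero_of_degenerate hc v fun l w hw hw' ↦ ?_
  refine hA _ (by simp +contextual) _ (List.mem_map_of_mem hw) ?_
  convert List.mem_map_of_mem hw' using 1
  ext e
  by_cases he : e ∈ S
  · simp [he]
  · simp [he, show e ≠ c from fun h ↦ he (h ▸ hc)]

theorem boxSum_eq_zero_of_swap (hcd : c ≠ d) (hc : c ∈ S) (hd : d ∈ S) (hq : q c = q d)
    {A : List (ι → ℕ) → ZMod 2} (hA : ∀ l : List (ι → ℕ), (∀ w ∈ l, ∀ e ∉ S, w e = q e) →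
      A (l.map (· ∘ Equiv.swap c d)) = A l) : boxSum S q A = 0 := by
  have hmem (e : ι) : Equiv.swap c d e ∈ S ↔ e ∈ S := by
    rw [Equiv.swap_apply_def]
    split_ifs <;> simp_all
  have hqe (e : ι) : q (Equiv.swap c d e) = q e := by
    rw [Equiv.swap_apply_def]
    split_ifs <;> simp_all
  have hcomm (w : ι → ℕ) : S.piecewise (w ∘ Equiv.swap c d) q =
      S.piecewise w q ∘ Equiv.swap c d := by
    ext e
    simp [Finset.piecewise, hmem, hqe]
  rw [← boxSum_piecewise]
  have hA' (l : List (ι → ℕ)) : A ((l.map (· ∘ Equiv.swap c d)).map (S.piecewise · q)) =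
      A (l.map (S.piecewise · q)) := by
    rw [← hA (l.map _) (by simp +contextual), List.map_map, List.map_map]
    exact congrArg A (List.map_congr_left fun w _ ↦ hcomm w)
  refine Finset.sum_involution (fun v _ ↦ v ∘ Equiv.swap c d) ?_ ?_ ?_ ?_
  · intro v _
    rw [cubeSum_comp_swap hc hd]
    simp only [hA', CharTwo.add_self_eq_zero]
  · exact fun v _ hne hfix ↦ hne (cubeSum_eq_zero_of_swap hcd hc hd hfix hA')
  · intro v hv
    refine mem_boxBase.mpr fun e ↦ ?_
    simpa only [hmem, hqe, Function.comp_apply] using mem_boxBase.mp hv (Equiv.swap c d e)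
  · intro v _
    ext e
    simp

end Box

end Kuhn

/-! ### Simplices with alternating labels -/

/-- Labels carrying a sign, ordered lexicographically; these are the vertex labels of Ky Fan's
combinatorial lemma. -/
abbrev SignedLabel (κ : Type*) : Type _ := κ ×ₗ Bool

namespace SignedLabel

open Kuhn

variable {κ : Type*}

/-- The unsigned part of a label. -/
def key (x : SignedLabel κ) : κ := (ofLex x).1

/-- The sign of a label, `true` for positive. -/
def sign (x : SignedLabel κ) : Bool := (ofLex x).2

/-- The label with the same key and the opposite sign. -/
def neg (x : SignedLabel κ) : SignedLabel κ := toLex (x.key, !x.sign)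

theorem map_key_map_neg (l : List (SignedLabel κ)) : (l.map neg).map key = l.map key :=
  List.map_map

/-- The indicator of the lists whose signs alternate, the first of them being `b`. -/
def alternating : Bool → List (SignedLabel κ) → ZMod 2
  | _, [] => 1
  | b, x :: l => if x.sign = b then alternating (!b) l else 0

theorem alternating_map_neg (b : Bool) (l : List (SignedLabel κ)) :
    alternating b (l.map neg) = alternating (!b) l := by
  induction l generalizing b with
  | nil => rfl
  | cons x l ih =>
    have hsign : x.neg.sign = b ↔ x.sign = !b := Bool.not_eq_eq_eq_not
    simp only [List.map_cons, alternating, ih, hsign]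

theorem coboundary_alternating (b : Bool) (l : List (SignedLabel κ)) :
    coboundary (alternating b) l = alternating b l + alternating (!b) l := by
  induction l generalizing b with
  | nil => exact (CharTwo.add_self_eq_zero 1).symm
  | cons x l ih =>
    rw [coboundary_cons]
    by_cases h : x.sign = b
    · have h₁ : coboundary (fun t ↦ alternating (!b) t) l =
          alternating (!b) l + alternating b l := by simpa using ih !b
      simp only [alternating, h, if_true, Bool.eq_not_self, if_false, add_zero]
      rw [h₁, add_left_comm, CharTwo.add_self_eq_zero, add_zero]
    · have h₁ : x.sign = !b := Bool.eq_not.mpr h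
      simp [alternating, h₁, coboundary_zero]

variable [LinearOrder κ]

/-- Ky Fan's cochain: the indicator of the simplices whose labels have distinct keys and, listed by
increasing key, alternate in sign starting with a positive one. -/
def fan (l : List (SignedLabel κ)) : ZMod 2 :=
  if (l.map key).Nodup then alternating true (Multiset.sort (l : Multiset (SignedLabel κ))) else 0

theorem fan_eq_of_perm {l m : List (SignedLabel κ)} (h : l.Perm m) : fan l = fan m := by
  unfold fan
  rw [Multiset.coe_eq_coe.mpr h]
  simp only [(h.map key).nodup_iff]

theorem fan_eq_zero {l : List (SignedLabel κ)} (h : ¬ (l.map key).Nodup) : fan l = 0 :=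
  if_neg h

theorem exists_perm_pairwise_key_lt {l : List (SignedLabel κ)} (h : (l.map key).Nodup) :
    ∃ m : List (SignedLabel κ), l.Perm m ∧ m.Pairwise fun x y ↦ x.key < y.key := by
  set m := Multiset.sort (l : Multiset (SignedLabel κ))
  have hperm : l.Perm m := Multiset.coe_eq_coe.mp (Multiset.sort_eq _ _).symm
  have hsorted : m.Pairwise (· ≤ ·) := Multiset.pairwise_sort _ _
  have hnodup := List.pairwise_map.mp ((hperm.map key).nodup_iff.mp h)
  refine ⟨m, hperm, (hsorted.and hnodup).imp fun ⟨hle, hne⟩ ↦ lt_of_le_of_ne ?_ hne⟩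
  exact (Prod.Lex.le_iff.mp hle).elim le_of_lt fun h ↦ h.1.le

theorem fan_of_pairwise_key_lt {l : List (SignedLabel κ)}
    (h : l.Pairwise fun x y ↦ x.key < y.key) : fan l = alternating true l := by
  have hnodup : (l.map key).Nodup := List.pairwise_map.mpr (h.imp LT.lt.ne)
  have hsorted : l.Pairwise (· ≤ ·) := h.imp fun h ↦ Prod.Lex.le_iff.mpr (Or.inl h)
  rw [fan, if_pos hnodup]
  exact congrArg _ (List.Perm.eq_of_pairwise (fun _ _ _ _ ↦ le_antisymm)
    (Multiset.pairwise_sort _ _) hsorted (Multiset.coe_eq_coe.mp (Multiset.sort_eq _ _)))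

theorem coboundary_fan_of_nodup {l : List (SignedLabel κ)} (h : (l.map key).Nodup) :
    coboundary fan l = fan l + fan (l.map neg) := by
  obtain ⟨m, hlm, hm⟩ := exists_perm_pairwise_key_lt h
  have hface : coboundary fan m = coboundary (alternating true) m :=
    Finset.sum_congr rfl fun i _ ↦
      fan_of_pairwise_key_lt (hm.sublist (List.eraseIdx_sublist _ _))
  have hneg : (m.map neg).Pairwise fun x y ↦ x.key < y.key := List.pairwise_map.mpr hm
  rw [coboundary_eq_of_perm (fun _ _ ↦ fan_eq_of_perm) hlm, fan_eq_of_perm hlm,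
    fan_eq_of_perm (hlm.map neg), fan_of_pairwise_key_lt hm, fan_of_pairwise_key_lt hneg,
    alternating_map_neg, hface, coboundary_alternating]

theorem coboundary_fan_of_duplicate {l : List (SignedLabel κ)} (h : ¬ l.Nodup) :
    coboundary fan l = 0 := by
  obtain ⟨x, hx⟩ := List.exists_duplicate_iff_not_nodup.mpr h
  obtain ⟨t, ht⟩ := (List.duplicate_iff_sublist.mp hx).exists_perm_append
  have hdup : (fun s ↦ fan (x :: x :: s)) = fun _ ↦ 0 := by
    ext s
    exact fan_eq_zero (by simp)
  rw [coboundary_eq_of_perm (fun _ _ ↦ fan_eq_of_perm) ht]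
  simp only [List.cons_append, List.nil_append, coboundary_cons, hdup, coboundary_zero, add_zero,
    CharTwo.add_self_eq_zero]

theorem coboundary_fan {l : List (SignedLabel κ)}
    (hl : ∀ x ∈ l, ∀ y ∈ l, x.key = y.key → x = y) :
    coboundary fan l = fan l + fan (l.map neg) := by
  by_cases h : (l.map key).Nodup
  · exact coboundary_fan_of_nodup h
  · rw [coboundary_fan_of_duplicate fun hnd ↦ h (hnd.map_on hl), fan_eq_zero h,
      fan_eq_zero (by rwa [map_key_map_neg]), add_zero]

end SignedLabel

/-! ### Equivariant labellings of a grid -/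

/-- Coordinates of the cube parametrising `n` points of a polygon: `inl j` is the angle of the
`j`-th point and `inr j` is the ratio of the radii of the points `j` and `j + 1`. -/
abbrev Coord (n : ℕ) : Type := Fin n ⊕ Fin n

/-- A labelling of the grid `{0, …, 2gM}²ⁿ` with the symmetries of a labelling pulled back from
`SPⁿ(N_g)`, except that the sign changes across the first edge identification. -/
structure IsEquivariantLabelling {n : ℕ} {κ : Type*} (g M : ℕ)
    (lab : (Coord n → ℕ) → SignedLabel κ) : Prop where
  angle_periodic : ∀ w j, w (Sum.inl j) = 0 →
    lab (Function.update w (Sum.inl j) (2 * g * M)) = lab w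
  angle_of_center : ∀ w j x, w (Sum.inr j) = 0 → lab (Function.update w (Sum.inl j) x) = lab w
  angle_swap : ∀ w (j j' : Fin n), (j' : ℕ) = j + 1 → w (Sum.inr j) = 2 * g * M →
    lab (w ∘ Equiv.swap (Sum.inl j) (Sum.inl j')) = lab w
  boundary_neg : ∀ w (j : Fin n), (∀ i, j ≤ i → w (Sum.inr i) = 2 * g * M) →
    w (Sum.inl j) ≤ M → lab (w + Pi.single (Sum.inl j) M) = (lab w).neg
  boundary_eq : ∀ w (j : Fin n) (i : ℕ), (∀ i, j ≤ i → w (Sum.inr i) = 2 * g * M) → 1 ≤ i →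
    i < g → 2 * i * M ≤ w (Sum.inl j) → w (Sum.inl j) ≤ (2 * i + 1) * M →
    lab (w + Pi.single (Sum.inl j) M) = lab w
  eq_of_key_eq : ∀ u w, (∀ c, u c ≤ w c + 1) → (∀ c, w c ≤ u c + 1) →
    (lab u).key = (lab w).key → lab u = lab w

namespace IsEquivariantLabelling

open Kuhn SignedLabel

variable {n g M : ℕ} {κ : Type*} {lab : (Coord n → ℕ) → SignedLabel κ} {S : Finset (Coord n)}
  {q : Coord n → ℕ}

theorem boxSum_eq_zero_of_angle_swap (h : IsEquivariantLabelling g M lab)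
    (a : List (SignedLabel κ) → ZMod 2) {j j' : Fin n} (hj : (j' : ℕ) = j + 1)
    (hjS : Sum.inl j ∈ S) (hj'S : Sum.inl j' ∈ S) (hrS : Sum.inr j ∉ S)
    (hr : q (Sum.inr j) = 2 * g * M) (hq : q (Sum.inl j) = q (Sum.inl j')) :
    boxSum S q (fun l ↦ a (l.map lab)) = 0 := by
  have hjj' : j ≠ j' := fun e ↦ by simp [← e] at hj
  refine boxSum_eq_zero_of_swap (Sum.inl_injective.ne hjj') hjS hj'S hq fun l hl ↦ ?_
  rw [List.map_map]
  exact congrArg a (List.map_congr_left fun w hw ↦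
    h.angle_swap w j j' hj ((hl w hw _ hrS).trans hr))

theorem side_face (h : IsEquivariantLabelling g M lab) (a : List (SignedLabel κ) → ZMod 2)
    {j : Fin n} (hjS : Sum.inl j ∉ S) (hq : q (Sum.inl j) = 2 * g * M) :
    boxSum S q (fun l ↦ a (l.map lab)) =
      boxSum S (Function.update q (Sum.inl j) 0) fun l ↦ a (l.map lab) := by
  have hu : ∀ c ∈ S, (Pi.single (Sum.inl j) (2 * g * M) : Coord n → ℕ) c = 0 := fun c hc ↦
    Pi.single_eq_of_ne (ne_of_mem_of_not_mem hc hjS) _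
  have hqu : q = Function.update q (Sum.inl j) 0 + Pi.single (Sum.inl j) (2 * g * M) := by
    rw [update_zero_add_single, ← hq, Function.update_eq_self]
  conv_lhs => rw [hqu, boxSum_translate hu]
  simp only [List.map_map]
  refine boxSum_map_congr a fun w hw ↦ ?_
  have hwj : w (Sum.inl j) = 0 := by simpa [hjS] using hw (Sum.inl j)
  rw [Function.comp_apply, ← h.angle_periodic w j hwj, ← update_zero_add_single, ← hwj,
    Function.update_eq_self]

theorem edge_pair_eq (h : IsEquivariantLabelling g M lab) (a : List (SignedLabel κ) → ZMod 2)
    {j : Fin n} (hjS : Sum.inl j ∈ S) (hrS : ∀ i, j ≤ i → Sum.inr i ∉ S)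
    (hr : ∀ i, j ≤ i → q (Sum.inr i) = 2 * g * M) (hq : q (Sum.inl j) ≤ M) {i : ℕ} (hi : 1 ≤ i)
    (hig : i < g) :
    boxSum S q (fun l ↦ a ((l.map (· + Pi.single (Sum.inl j) ((2 * i + 1) * M))).map lab)) =
      boxSum S q fun l ↦ a ((l.map (· + Pi.single (Sum.inl j) (2 * i * M))).map lab) := by
  simp only [List.map_map]
  refine boxSum_map_congr a fun w hw ↦ ?_
  have hwj : w (Sum.inl j) ≤ q (Sum.inl j) := by simpa [hjS] using hw (Sum.inl j)
  have hwr : ∀ i, j ≤ i → w (Sum.inr i) = 2 * g * M := fun i hji ↦ by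
    simpa [hrS i hji, hr i hji] using hw (Sum.inr i)
  rw [Function.comp_apply, add_one_mul, Pi.single_add, ← add_assoc]
  refine h.boundary_eq _ j i (fun i hji ↦ by simpa using hwr i hji) hi hig (by simp) ?_
  rw [Pi.add_apply, Pi.single_eq_same]
  linarith

theorem boundary_face (h : IsEquivariantLabelling g M lab) (hg : 1 ≤ g)
    (a : List (SignedLabel κ) → ZMod 2) {j : Fin n} (hjS : Sum.inl j ∈ S)
    (hrS : ∀ i, j ≤ i → Sum.inr i ∉ S) (hr : ∀ i, j ≤ i → q (Sum.inr i) = 2 * g * M)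
    (hq : q (Sum.inl j) = 2 * g * M) :
    boxSum S q (fun l ↦ a (l.map lab)) =
      boxSum S (Function.update q (Sum.inl j) M) (fun l ↦ a (l.map lab)) +
        boxSum S (Function.update q (Sum.inl j) M) fun l ↦ a ((l.map lab).map neg) := by
  have hpairs (f : ℕ → ZMod 2) (m : ℕ) :
      ∑ i ∈ Finset.range (2 * m), f i = ∑ i ∈ Finset.range m, (f (2 * i) + f (2 * i + 1)) := by
    induction m with
    | zero => simp
    | succ m ih =>
      simp only [mul_add, mul_one, Finset.sum_range_succ, ih, add_assoc]
  have hr' : ∀ i, j ≤ i → Function.update q (Sum.inl j) M (Sum.inr i) = 2 * g * M :=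
    fun i hji ↦ by simpa using hr i hji
  rw [boxSum_subdivide hjS hq, hpairs, Finset.sum_eq_single_of_mem 0 (Finset.mem_range.mpr hg)]
  · simp only [List.map_map]
    refine congrArg₂ (· + ·) (boxSum_map_congr a fun w _ ↦ by simp) ?_
    refine boxSum_map_congr a fun w hw ↦ ?_
    rw [mul_zero, zero_add, one_mul]
    refine h.boundary_neg w j (fun i hji ↦ ?_) ?_
    · simpa [hrS i hji, hr i hji] using hw (Sum.inr i)
    · simpa [hjS] using hw (Sum.inl j)
  · intro i hi hi₀
    rw [h.edge_pair_eq a hjS hrS hr' (by simp) (Nat.one_le_iff_ne_zero.mpr hi₀)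
      (by simpa using hi), CharTwo.add_self_eq_zero]

section Fan

variable [LinearOrder κ]

theorem boxSum_update_zero_eq_zero (h : IsEquivariantLabelling g M lab) {j : Fin n}
    (hjS : Sum.inl j ∈ S) (hrS : Sum.inr j ∉ S) :
    boxSum S (Function.update q (Sum.inr j) 0) (fun l ↦ fan (l.map lab)) = 0 := by
  refine boxSum_eq_zero_of_degenerate hjS fun l hl w hw hw' ↦ fan_eq_zero fun hnd ↦ ?_
  rw [List.map_map] at hnd
  have hlab : lab (w + Pi.single (Sum.inl j) 1) = lab w := by
    rw [← h.angle_of_center w j (w (Sum.inl j) + 1) ((hl w hw _ hrS).trans (by simp))]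
    congr 1
    ext c
    by_cases hc : c = Sum.inl j
    · subst hc
      simp
    · simp [hc]
  have := congrFun (List.inj_on_of_nodup_map hnd hw' hw (congrArg key hlab)) (Sum.inl j)
  simp at this

theorem boxSum_coboundary_fan (h : IsEquivariantLabelling g M lab) (S : Finset (Coord n))
    (q : Coord n → ℕ) :
    boxSum S q (coboundary fun l ↦ fan (l.map lab)) =
      boxSum S q fun l ↦ fan (l.map lab) + fan ((l.map lab).map neg) := by
  refine boxSum_congr fun l _ _ hl ↦ ?_
  rw [coboundary_map fan, coboundary_fan]
  intro x hx y hy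
  obtain ⟨u, hu, rfl⟩ := List.mem_map.mp hx
  obtain ⟨w, hw, rfl⟩ := List.mem_map.mp hy
  exact h.eq_of_key_eq u w (hl u hu w hw) (hl w hw u hu)

end Fan

end IsEquivariantLabelling

section Stage

variable {n : ℕ}

/-- The coordinates of the first `k` points. -/
def firstCoords (n k : ℕ) : Finset (Coord n) :=
  Finset.univ.filter fun c ↦ Sum.elim Fin.val Fin.val c < k

@[simp]
theorem inl_mem_firstCoords {k : ℕ} {j : Fin n} : Sum.inl j ∈ firstCoords n k ↔ (j : ℕ) < k := by
  simp [firstCoords]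

@[simp]
theorem inr_mem_firstCoords {k : ℕ} {j : Fin n} : Sum.inr j ∈ firstCoords n k ↔ (j : ℕ) < k := by
  simp [firstCoords]

theorem firstCoords_succ_erase_erase {k : ℕ} (hk : k < n) :
    ((firstCoords n (k + 1)).erase (Sum.inr ⟨k, hk⟩)).erase (Sum.inl ⟨k, hk⟩) =
      firstCoords n k := by
  ext (⟨i, hi⟩ | ⟨i, hi⟩) <;> simp <;> omega

theorem firstCoords_self : firstCoords n n = Finset.univ := by
  ext (j | j) <;> simp

/-- The corner of the box in which the first `k` points move over the whole polygon of angular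
size `L`, the others staying at the boundary point of angle `0`. -/
def stageCorner (n L k : ℕ) : Coord n → ℕ :=
  Sum.elim (fun j ↦ if (j : ℕ) < k then L else 0) fun _ ↦ L

@[simp]
theorem stageCorner_inr (L k : ℕ) (j : Fin n) : stageCorner n L k (Sum.inr j) = L := rfl

theorem stageCorner_inl_of_lt (L : ℕ) {k : ℕ} {j : Fin n} (hj : (j : ℕ) < k) :
    stageCorner n L k (Sum.inl j) = L := if_pos hj

theorem update_stageCorner_succ (L : ℕ) {k : ℕ} (hk : k < n) :
    Function.update (stageCorner n L (k + 1)) (Sum.inl ⟨k, hk⟩) 0 = stageCorner n L k := by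
  ext (j | j)
  · by_cases hj : j = ⟨k, hk⟩
    · subst hj
      simp [stageCorner]
    · have hjk : (j : ℕ) ≠ k := fun e ↦ hj (Fin.ext e)
      have hlt : (j : ℕ) ≤ k ↔ (j : ℕ) < k := by omega
      simp [stageCorner, hj, hlt]
  · simp [stageCorner]

end Stage

namespace IsEquivariantLabelling

open Kuhn SignedLabel

variable {n g M k : ℕ} {κ : Type*} [LinearOrder κ] {lab : (Coord n → ℕ) → SignedLabel κ}

/-- The number modulo 2 of the simplices with alternating labels, of either starting sign, in the
box of `stageCorner`. -/
def stageDegree (g M : ℕ) (lab : (Coord n → ℕ) → SignedLabel κ) (k : ℕ) : ZMod 2 :=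
  boxSum (firstCoords n k) (stageCorner n (2 * g * M) k)
    fun l ↦ fan (l.map lab) + fan ((l.map lab).map neg)

theorem stageDegree_zero : stageDegree g M lab 0 = 1 := by
  have h₀ : firstCoords n 0 = ∅ := by simp [firstCoords]
  have hfan (x : SignedLabel κ) : fan [x] = if x.sign = true then 1 else 0 :=
    fan_of_pairwise_key_lt (List.pairwise_singleton _ _)
  have hsign (x : SignedLabel κ) : x.neg.sign = !x.sign := rfl
  simp only [stageDegree, h₀, boxSum_empty, List.map_cons, List.map_nil, hfan, hsign]
  cases (lab _).sign <;> simp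

theorem stageDegree_succ_eq_outer (h : IsEquivariantLabelling g M lab) (hk : k < n) :
    stageDegree g M lab (k + 1) =
      boxSum ((firstCoords n (k + 1)).erase (Sum.inr ⟨k, hk⟩)) (stageCorner n (2 * g * M) (k + 1))
        fun l ↦ fan (l.map lab) := by
  have hmem : Sum.inr ⟨k, hk⟩ ∈ firstCoords n (k + 1) := by simp
  rw [stageDegree, ← h.boxSum_coboundary_fan, boxSum_coboundary ⟨_, hmem⟩,
    Finset.sum_eq_single_of_mem _ hmem]
  · rw [h.boxSum_update_zero_eq_zero (j := ⟨k, hk⟩) (by simp) (by simp), add_zero]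
  · rintro (j | j) hj hne
    · rw [inl_mem_firstCoords] at hj
      rw [← h.side_face fan (by simp) (stageCorner_inl_of_lt _ hj), CharTwo.add_self_eq_zero]
    · rw [inr_mem_firstCoords] at hj
      have hjk : (j : ℕ) < k :=
        (Nat.lt_succ_iff.mp hj).lt_of_ne fun e ↦ hne (congrArg Sum.inr (Fin.ext e))
      rw [h.boxSum_update_zero_eq_zero (j := j) (by simp [hj]) (by simp), add_zero]
      refine h.boxSum_eq_zero_of_angle_swap fan (j' := ⟨j + 1, by omega⟩) rfl (by simp [hj])
        (by simpa using hjk) (by simp) (by simp) ?_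
      rw [stageCorner_inl_of_lt _ hj, stageCorner_inl_of_lt _ (by simpa using hjk)]

theorem outer_eq_boxSum_coboundary (h : IsEquivariantLabelling g M lab) (hg : 1 ≤ g)
    (hk : k < n) :
    boxSum ((firstCoords n (k + 1)).erase (Sum.inr ⟨k, hk⟩)) (stageCorner n (2 * g * M) (k + 1))
        (fun l ↦ fan (l.map lab)) =
      boxSum ((firstCoords n (k + 1)).erase (Sum.inr ⟨k, hk⟩))
        (Function.update (stageCorner n (2 * g * M) (k + 1)) (Sum.inl ⟨k, hk⟩) M)
        (coboundary fun l ↦ fan (l.map lab)) := by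
  rw [h.boundary_face hg fan (j := ⟨k, hk⟩) (by simp) ?_ (by simp)
    (stageCorner_inl_of_lt _ (by simp)), h.boxSum_coboundary_fan, boxSum_add]
  intro i hki
  rw [Finset.mem_erase, inr_mem_firstCoords]
  rintro ⟨hne, hlt⟩
  exact hne (congrArg Sum.inr (Fin.ext (le_antisymm (Nat.lt_succ_iff.mp hlt) hki)))

/-- If the point `k` is the neighbour of the point `j` then its angle is confined to one edge while
that of `j` is not, so the angle of `j` is confined to one edge before swapping. -/
theorem boxSum_outer_eq_zero_of_radius (h : IsEquivariantLabelling g M lab) (hg : 1 ≤ g)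
    (hk : k < n) {j : Fin n} (hj : (j : ℕ) < k) :
    boxSum (((firstCoords n (k + 1)).erase (Sum.inr ⟨k, hk⟩)).erase (Sum.inr j))
      (Function.update (stageCorner n (2 * g * M) (k + 1)) (Sum.inl ⟨k, hk⟩) M)
      (fun l ↦ fan (l.map lab)) = 0 := by
  have hmem (i : Fin n) (hi : (i : ℕ) ≤ k) :
      Sum.inl i ∈ ((firstCoords n (k + 1)).erase (Sum.inr ⟨k, hk⟩)).erase (Sum.inr j) := by
    simpa using Nat.lt_succ_iff.mpr hi
  have hne (i : Fin n) (hi : (i : ℕ) < k) : (Sum.inl i : Coord n) ≠ Sum.inl ⟨k, hk⟩ :=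
    fun e ↦ hi.ne (congrArg Fin.val (Sum.inl_injective e))
  have hval (i : Fin n) (hi : (i : ℕ) < k) :
      Function.update (stageCorner n (2 * g * M) (k + 1)) (Sum.inl ⟨k, hk⟩) M (Sum.inl i) =
        2 * g * M := by
    rw [Function.update_of_ne (hne i hi), stageCorner_inl_of_lt _ (by omega)]
  by_cases hjk : (j : ℕ) + 1 = k
  · have hrS (i : Fin n) (hji : j ≤ i) :
        Sum.inr i ∉ ((firstCoords n (k + 1)).erase (Sum.inr ⟨k, hk⟩)).erase (Sum.inr j) := by
      have : (j : ℕ) ≤ i := hji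
      simp only [Finset.mem_erase, inr_mem_firstCoords, ne_eq, Sum.inr.injEq, Fin.ext_iff]
      omega
    have hzero (a : List (SignedLabel κ) → ZMod 2) :=
      h.boxSum_eq_zero_of_angle_swap a hjk.symm (hmem j hj.le) (hmem ⟨k, hk⟩ le_rfl) (by simp)
        (q := Function.update (Function.update (stageCorner n (2 * g * M) (k + 1))
          (Sum.inl ⟨k, hk⟩) M) (Sum.inl j) M) (by simp)
        (by rw [Function.update_self, Function.update_of_ne (hne j hj).symm, Function.update_self])
    rw [h.boundary_face hg fan (hmem j hj.le) hrS (by simp) (hval j hj), hzero fan,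
      hzero fun l ↦ fan (l.map neg), add_zero]
  · have hjk' : (j : ℕ) + 1 < k := by omega
    exact h.boxSum_eq_zero_of_angle_swap fan (j' := ⟨j + 1, by omega⟩) rfl (hmem j hj.le)
      (hmem _ hj) (by simp) (by simp) ((hval j hj).trans (hval ⟨j + 1, by omega⟩ hjk').symm)

theorem boxSum_coboundary_outer (h : IsEquivariantLabelling g M lab) (hg : 1 ≤ g) (hk : k < n) :
    boxSum ((firstCoords n (k + 1)).erase (Sum.inr ⟨k, hk⟩))
        (Function.update (stageCorner n (2 * g * M) (k + 1)) (Sum.inl ⟨k, hk⟩) M)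
        (coboundary fun l ↦ fan (l.map lab)) =
      boxSum (firstCoords n k)
          (Function.update (stageCorner n (2 * g * M) (k + 1)) (Sum.inl ⟨k, hk⟩) M)
          (fun l ↦ fan (l.map lab)) +
        boxSum (firstCoords n k) (stageCorner n (2 * g * M) k) fun l ↦ fan (l.map lab) := by
  have hmem : Sum.inl ⟨k, hk⟩ ∈ (firstCoords n (k + 1)).erase (Sum.inr ⟨k, hk⟩) := by simp
  rw [boxSum_coboundary ⟨_, hmem⟩, Finset.sum_eq_single_of_mem _ hmem]
  · rw [firstCoords_succ_erase_erase, Function.update_idem, update_stageCorner_succ]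
  · rintro (j | j) hj hne
    · rw [← h.side_face fan (by simp), CharTwo.add_self_eq_zero]
      rw [Function.update_of_ne hne, stageCorner_inl_of_lt _ (by simpa using hj)]
    · have hjk : (j : ℕ) < k := by
        simp only [Finset.mem_erase, inr_mem_firstCoords, ne_eq, Sum.inr.injEq, Fin.ext_iff] at hj
        omega
      rw [h.boxSum_outer_eq_zero_of_radius hg hk hjk,
        h.boxSum_update_zero_eq_zero (j := j) (by simp; omega) (by simp), add_zero]

theorem boxSum_shifted_stage (h : IsEquivariantLabelling g M lab) (hk : k < n) :
    boxSum (firstCoords n k)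
        (Function.update (stageCorner n (2 * g * M) (k + 1)) (Sum.inl ⟨k, hk⟩) M)
        (fun l ↦ fan (l.map lab)) =
      boxSum (firstCoords n k) (stageCorner n (2 * g * M) k)
        fun l ↦ fan ((l.map lab).map neg) := by
  rw [← update_zero_add_single, update_stageCorner_succ, boxSum_translate]
  · simp only [List.map_map]
    refine boxSum_map_congr fan fun w hw ↦ h.boundary_neg w ⟨k, hk⟩ (fun i hki ↦ ?_) ?_
    · have hki' : ¬ (i : ℕ) < k := not_lt.mpr hki
      simpa [hki'] using hw (Sum.inr i)
    · have : w (Sum.inl ⟨k, hk⟩) = 0 := by simpa [stageCorner] using hw (Sum.inl ⟨k, hk⟩)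
      omega
  · intro c hc
    exact Pi.single_eq_of_ne (by rintro rfl; simp at hc) _

theorem stageDegree_succ (h : IsEquivariantLabelling g M lab) (hg : 1 ≤ g) (hk : k < n) :
    stageDegree g M lab (k + 1) = stageDegree g M lab k := by
  rw [h.stageDegree_succ_eq_outer hk, h.outer_eq_boxSum_coboundary hg hk,
    h.boxSum_coboundary_outer hg hk, h.boxSum_shifted_stage hk, stageDegree, boxSum_add, add_comm]

theorem stageDegree_eq_one (h : IsEquivariantLabelling g M lab) (hg : 1 ≤ g) (hk : k ≤ n) :
    stageDegree g M lab k = 1 := by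
  induction k with
  | zero => exact stageDegree_zero
  | succ k ih => rw [h.stageDegree_succ hg hk, ih (by omega)]

/-- A top-dimensional simplex with an alternating labelling has `2n + 1` distinct keys. -/
theorem two_mul_lt_card [Fintype κ] (h : IsEquivariantLabelling g M lab) (hg : 1 ≤ g) :
    2 * n < Fintype.card κ := by
  by_contra! hcard
  refine one_ne_zero ((h.stageDegree_eq_one hg le_rfl).symm.trans ?_)
  rw [stageDegree, ← boxSum_zero (firstCoords n n) (stageCorner n (2 * g * M) n)]
  refine boxSum_congr fun l hl _ _ ↦ ?_
  have hnd : ¬ ((l.map lab).map key).Nodup := fun hnd ↦ by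
    have := hnd.length_le_card
    simp [hl, firstCoords_self] at this
    omega
  rw [fan_eq_zero hnd, fan_eq_zero (by rwa [map_key_map_neg]), add_zero]

end IsEquivariantLabelling

/-! ### Polar coordinates on the polygon -/

/-- The point of the unit circle reached from `1` after `x` full turns. -/
def turn (x : ℝ) : ℂ := Complex.exp (2 * Real.pi * Complex.I * x)

@[fun_prop]
theorem continuous_turn : Continuous turn := by
  unfold turn
  fun_prop

theorem turn_eq_exp_ofReal_mul_I (x : ℝ) :
    turn x = Complex.exp (((2 * Real.pi * x : ℝ) : ℂ) * Complex.I) := by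
  rw [turn]
  push_cast
  ring_nf

@[simp]
theorem norm_turn (x : ℝ) : ‖turn x‖ = 1 := by
  rw [turn_eq_exp_ofReal_mul_I, Complex.norm_exp_ofReal_mul_I]

theorem turn_add (x y : ℝ) : turn (x + y) = turn x * turn y := by
  simp only [turn, ← Complex.exp_add]
  push_cast
  ring_nf

@[simp]
theorem turn_zero : turn 0 = 1 := by simp [turn]

theorem turn_pow (x : ℝ) (N : ℕ) : turn x ^ N = turn (N * x) := by
  simp only [turn, ← Complex.exp_nat_mul]
  push_cast
  ring_nf

theorem turn_eq_turn_iff {x y : ℝ} : turn x = turn y ↔ ∃ m : ℤ, x = y + m := by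
  have h := Complex.two_pi_I_ne_zero
  simp only [turn, Complex.exp_eq_exp_iff_exists_int]
  refine exists_congr fun m ↦ ⟨fun e ↦ ?_, fun e ↦ ?_⟩
  · have := mul_left_cancel₀ h (e.trans (by ring : _ = 2 * Real.pi * Complex.I * ((y : ℂ) + m)))
    exact_mod_cast this
  · rw [e]
    push_cast
    ring

@[simp]
theorem turn_natCast (m : ℕ) : turn m = 1 := by
  rw [← turn_zero, turn_eq_turn_iff]
  exact ⟨m, by simp⟩

@[simp]
theorem turn_one : turn 1 = 1 := by simpa using turn_natCast 1

theorem turn_add_half (x : ℝ) : turn (x + 1 / 2) = -turn x := by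
  have half : turn (1 / 2) = -1 := by
    rw [turn_eq_exp_ofReal_mul_I, ← Complex.exp_pi_mul_I]
    ring_nf
  rw [turn_add, half, mul_neg_one]

theorem norm_mul_turn_arg (u : ℂ) : (‖u‖ : ℂ) * turn (u.arg / (2 * Real.pi)) = u := by
  rw [turn_eq_exp_ofReal_mul_I, mul_div_cancel₀ _ (by positivity),
    Complex.norm_mul_exp_arg_mul_I]

theorem polyBP_eq_turn (N k : ℕ) (t : ℝ) : polyBP N k t = turn ((k + t) / N) := by
  simp [polyBP, turn]

theorem eq_or_of_turn_eq_turn {a a' : I} (h : turn a = turn a') :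
    a = a' ∨ a = 0 ∧ a' = 1 ∨ a = 1 ∧ a' = 0 := by
  obtain ⟨m, hm⟩ := turn_eq_turn_iff.mp h
  obtain ⟨ha₀, ha₁⟩ := a.2
  obtain ⟨ha₀', ha₁'⟩ := a'.2
  have h₁ : -1 ≤ m := by
    rify
    linarith
  have h₂ : m ≤ 1 := by
    rify
    linarith
  simp only [Subtype.ext_iff, Set.Icc.coe_zero, Set.Icc.coe_one]
  obtain rfl | rfl | rfl : m = -1 ∨ m = 0 ∨ m = 1 := by omega
  · push_cast at hm
    exact .inr (.inl ⟨by linarith, by linarith⟩)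
  · exact .inl (by simpa using hm)
  · push_cast at hm
    exact .inr (.inr ⟨by linarith, by linarith⟩)

namespace Disc

/-- The point of the disc at angle `p.1` (in full turns) and radius `p.2`. -/
def polar (p : I × I) : Disc :=
  ⟨(p.2 : ℝ) * turn p.1, by simpa [abs_of_nonneg p.2.2.1] using p.2.2.2⟩

theorem coe_polar (p : I × I) : (polar p : ℂ) = (p.2 : ℝ) * turn p.1 := rfl

theorem continuous_polar : Continuous polar :=
  Continuous.subtype_mk (by fun_prop) _

theorem norm_polar (p : I × I) : ‖(polar p : ℂ)‖ = p.2 := by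
  simp [coe_polar, abs_of_nonneg p.2.2.1]

theorem polar_surjective : Function.Surjective polar := by
  intro z
  let θ : ℝ := (z : ℂ).arg / (2 * Real.pi)
  have angle : turn (Int.fract θ) = turn θ :=
    turn_eq_turn_iff.mpr ⟨-⌊θ⌋, by simp [Int.fract, sub_eq_add_neg]⟩
  refine ⟨(⟨Int.fract θ, Int.fract_nonneg _, (Int.fract_lt_one _).le⟩,
    ⟨‖(z : ℂ)‖, norm_nonneg _, z.2⟩), Subtype.ext ?_⟩
  rw [coe_polar, angle, norm_mul_turn_arg]

instance : CompactSpace Disc where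
  isCompact_univ := polar_surjective.range_eq ▸ isCompact_range continuous_polar

theorem isQuotientMap_polar : Topology.IsQuotientMap polar :=
  .of_surjective_continuous polar_surjective continuous_polar

theorem snd_eq_of_polar_eq {p q : I × I} (h : polar p = polar q) : p.2 = q.2 :=
  Subtype.ext (by rw [← norm_polar, ← norm_polar, h])

theorem eq_zero_or_turn_eq_of_polar_eq {p q : I × I} (h : polar p = polar q) :
    p.2 = 0 ∨ turn p.1 = turn q.1 := by
  have hval : ((p.2 : ℝ) : ℂ) * turn p.1 = (p.2 : ℝ) * turn q.1 := by
    simpa only [coe_polar, ← snd_eq_of_polar_eq h] using congrArg Subtype.val h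
  rcases mul_eq_mul_left_iff.mp hval with h | h
  · exact .inr h
  · exact .inl (Subtype.ext (by exact_mod_cast h))

end Disc

/-! ### The surface as a quotient of the polar square -/

namespace Ng

variable {g : ℕ}

/-- The projection of the polygon onto the surface. -/
def mk (g : ℕ) (z : Disc) : Ng g := Quot.mk _ z

theorem isQuotientMap_mk (g : ℕ) : Topology.IsQuotientMap (mk g) := isQuotientMap_quot_mk

theorem continuous_mk (g : ℕ) : Continuous (mk g) := (isQuotientMap_mk g).continuous

instance (g : ℕ) : CompactSpace (Ng g) :=
  inferInstanceAs (CompactSpace (Quot (nonorientRel g)))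

/-- The point of the surface with polar coordinates `p`. -/
def polar (g : ℕ) (p : I × I) : Ng g := mk g (Disc.polar p)

theorem continuous_polar (g : ℕ) : Continuous (polar g) :=
  (continuous_mk g).comp Disc.continuous_polar

theorem isQuotientMap_polar (g : ℕ) : Topology.IsQuotientMap (polar g) :=
  (isQuotientMap_mk g).comp Disc.isQuotientMap_polar

/-- The boundary point at angle `a` lies on an edge `2j` of the `2g`-gon, and the boundary point
at angle `a'` is the one glued to it on the edge `2j + 1`. -/
structure AreGluedAngles (g j : ℕ) (a a' : I) : Prop where
  lt : j < g
  le_left : 2 * j ≤ 2 * g * (a : ℝ)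
  left_le : 2 * g * (a : ℝ) ≤ 2 * j + 1
  right_eq : 2 * g * (a' : ℝ) = 2 * g * (a : ℝ) + 1

theorem nonorientRel_polar {j : ℕ} {a a' : I} (h : AreGluedAngles g j a a') :
    nonorientRel g (Disc.polar (a, 1)) (Disc.polar (a', 1)) := by
  obtain ⟨hj, h₁, h₂, h₃⟩ := h
  have hg : (2 * g : ℝ) ≠ 0 := by
    have : 0 < g := by omega
    positivity
  refine ⟨⟨j, hj⟩, 2 * g * a - 2 * j, by linarith, by linarith, ?_, ?_⟩ <;>
    rw [polyBP_eq_turn, Disc.coe_polar, Set.Icc.coe_one, Complex.ofReal_one, one_mul] <;>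
    congr 1 <;> rw [eq_div_iff (by exact_mod_cast hg)] <;> push_cast <;> linarith

theorem exists_areGluedAngles_of_nonorientRel {z w : Disc} (h : nonorientRel g z w) :
    ∃ j a a', AreGluedAngles g j a a' ∧ z = Disc.polar (a, 1) ∧ w = Disc.polar (a', 1) := by
  obtain ⟨j, t, ht₀, ht₁, hz, hw⟩ := h
  have hg : (0 : ℝ) < 2 * g := by
    have := j.pos
    positivity
  have hj : (j : ℝ) + 1 ≤ g := by exact_mod_cast j.2
  refine ⟨j, ⟨(2 * j + t) / (2 * g), by positivity, ?_⟩,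
    ⟨(2 * j + 1 + t) / (2 * g), by positivity, ?_⟩, ⟨j.2, ?_, ?_, ?_⟩, ?_, ?_⟩
  · rw [div_le_one hg]
    linarith
  · rw [div_le_one hg]
    linarith
  · rw [mul_div_cancel₀ _ hg.ne']
    linarith
  · rw [mul_div_cancel₀ _ hg.ne']
    linarith
  · rw [mul_div_cancel₀ _ hg.ne', mul_div_cancel₀ _ hg.ne']
    ring
  · refine Subtype.ext ?_
    simp [hz, Disc.coe_polar, polyBP_eq_turn]
  · refine Subtype.ext ?_
    simp [hw, Disc.coe_polar, polyBP_eq_turn]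

theorem polar_eq_of_areGluedAngles {j : ℕ} {a a' : I} (h : AreGluedAngles g j a a') :
    polar g (a, 1) = polar g (a', 1) :=
  Quot.sound (nonorientRel_polar h)

/-- The compatibility that lets a function of the polar coordinates descend to the surface. -/
structure IsCompatible {Z : Type*} (g : ℕ) (f : I × I → Z) : Prop where
  center : ∀ a a', f (a, 0) = f (a', 0)
  seam : ∀ b, f (0, b) = f (1, b)
  edge : ∀ j a a', AreGluedAngles g j a a' → f (a, 1) = f (a', 1)

theorem IsCompatible.eq_of_disc_polar_eq {Z : Type*} {f : I × I → Z} (hf : IsCompatible g f)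
    {p q : I × I} (h : Disc.polar p = Disc.polar q) : f p = f q := by
  obtain ⟨a, b⟩ := p
  obtain ⟨a', b'⟩ := q
  obtain rfl : b = b' := Disc.snd_eq_of_polar_eq h
  rcases Disc.eq_zero_or_turn_eq_of_polar_eq h with hb | hturn
  · obtain rfl : b = 0 := hb
    exact hf.center a a'
  · rcases eq_or_of_turn_eq_turn hturn with h | ⟨h, h'⟩ | ⟨h, h'⟩ <;>
      (dsimp only at h; subst h)
    · rfl
    · dsimp only at h'
      rw [h', hf.seam]
    · dsimp only at h'
      rw [h', hf.seam]

theorem IsCompatible.eq_of_polar_eq {Z : Type*} {f : I × I → Z} (hf : IsCompatible g f)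
    {p q : I × I} (h : polar g p = polar g q) : f p = f q := by
  let F : Disc → Z := fun z ↦ f (Function.surjInv Disc.polar_surjective z)
  have hF (p : I × I) : F (Disc.polar p) = f p :=
    hf.eq_of_disc_polar_eq (Function.surjInv_eq Disc.polar_surjective _)
  have hrel (z w : Disc) (hzw : nonorientRel g z w) : F z = F w := by
    obtain ⟨j, a, a', hglue, rfl, rfl⟩ := exists_areGluedAngles_of_nonorientRel hzw
    rw [hF, hF, hf.edge j a a' hglue]
  calc f p = Quot.lift F hrel (polar g p) := (hF p).symm
    _ = Quot.lift F hrel (polar g q) := by rw [h]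
    _ = f q := hF q

/-! ### The surface is Hausdorff -/

/-- The map to the circle that turns once along each of the edges `2j` and `2j + 1` and is constant
on the other edges, in terms of the position `x ∈ [0, 2g]` on the boundary of the polygon. -/
def pairTurn (j : ℕ) (x : ℝ) : ℂ := turn (max (2 * j) (min x (2 * j + 2)))

@[fun_prop]
theorem continuous_pairTurn (j : ℕ) : Continuous (pairTurn j) := by
  unfold pairTurn
  fun_prop

theorem pairTurn_of_mem {j : ℕ} {x : ℝ} (h : x ∈ Set.Icc (2 * j : ℝ) (2 * j + 2)) :
    pairTurn j x = turn x := by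
  rw [pairTurn, min_eq_left h.2, max_eq_right h.1]

theorem pairTurn_of_le {j : ℕ} {x : ℝ} (h : x ≤ 2 * j) : pairTurn j x = 1 := by
  rw [pairTurn, max_eq_left (min_le_of_left_le h)]
  exact_mod_cast turn_natCast (2 * j)

theorem pairTurn_of_ge {j : ℕ} {x : ℝ} (h : 2 * j + 2 ≤ x) : pairTurn j x = 1 := by
  rw [pairTurn, min_eq_right h, max_eq_right (by linarith)]
  exact_mod_cast turn_natCast (2 * j + 2)

theorem pairTurn_of_notMem_Ioo {j : ℕ} {x : ℝ} (h : x ∉ Set.Ioo (2 * j : ℝ) (2 * j + 2)) :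
    pairTurn j x = 1 := by
  rcases le_or_gt x (2 * j) with hx | hx
  · exact pairTurn_of_le hx
  · exact pairTurn_of_ge (not_lt.mp fun hx' ↦ h ⟨hx, hx'⟩)

theorem pairTurn_of_turn_eq_one (j : ℕ) {x : ℝ} (h : turn x = 1) : pairTurn j x = 1 := by
  by_cases hx : x ∈ Set.Ioo (2 * j : ℝ) (2 * j + 2)
  · rw [pairTurn_of_mem (Set.Ioo_subset_Icc_self hx), h]
  · exact pairTurn_of_notMem_Ioo hx

theorem mem_Ioo_of_pairTurn_ne_one {j : ℕ} {x : ℝ} (h : pairTurn j x ≠ 1) :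
    x ∈ Set.Ioo (2 * j : ℝ) (2 * j + 2) :=
  not_imp_comm.mp pairTurn_of_notMem_Ioo h

theorem pairTurn_eq_of_areGluedAngles {j : ℕ} {a a' : I} (h : AreGluedAngles g j a a') (i : ℕ) :
    pairTurn i (2 * g * a) = pairTurn i (2 * g * a') := by
  obtain ⟨-, h₁, h₂, h₃⟩ := h
  rcases lt_trichotomy i j with hij | rfl | hij
  · have : (i : ℝ) + 1 ≤ j := by exact_mod_cast hij
    rw [pairTurn_of_ge (by linarith), pairTurn_of_ge (by linarith)]
  · rw [pairTurn_of_mem ⟨by linarith, by linarith⟩, pairTurn_of_mem ⟨by linarith, by linarith⟩,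
      h₃, turn_add, turn_one, mul_one]
  · have : (j : ℝ) + 1 ≤ i := by exact_mod_cast hij
    rw [pairTurn_of_le (by linarith), pairTurn_of_le (by linarith)]

theorem exists_mem_Icc_edgePair (hg : 1 ≤ g) (a : I) :
    ∃ j : Fin g, 2 * g * (a : ℝ) ∈ Set.Icc (2 * j : ℝ) (2 * j + 2) := by
  have hg₀ : (0 : ℝ) < g := by positivity
  rcases a.2.2.eq_or_lt with ha | ha
  · refine ⟨⟨g - 1, by omega⟩, ?_⟩
    rw [ha, Nat.cast_sub hg]
    constructor <;> push_cast <;> linarith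
  · have hga : 0 ≤ g * (a : ℝ) := mul_nonneg hg₀.le a.2.1
    refine ⟨⟨⌊g * (a : ℝ)⌋₊, (Nat.floor_lt hga).mpr (by nlinarith)⟩, ?_, ?_⟩
    · linarith [Nat.floor_le hga]
    · linarith [Nat.lt_floor_add_one (g * (a : ℝ))]

/-- The common image of all the corners of the polygon. -/
def vertex (g : ℕ) : Ng g := polar g (0, 1)

theorem polar_eq_vertex_of_natCast (hg : 1 ≤ g) {m : ℕ} {a : I} (h : 2 * g * (a : ℝ) = m) :
    polar g (a, 1) = vertex g := by
  have hg₀ : (0 : ℝ) < 2 * g := by positivity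
  induction m generalizing a with
  | zero =>
    have : (a : ℝ) = 0 := by simpa [hg₀.ne'] using h
    rw [vertex, show a = 0 from Subtype.ext this]
  | succ m ih =>
    push_cast at h
    have hm : (m : ℝ) ≤ 2 * g := by nlinarith [a.2.2]
    let b : I := ⟨m / (2 * g), by positivity, (div_le_one hg₀).mpr hm⟩
    have hb : 2 * g * (b : ℝ) = m := mul_div_cancel₀ _ hg₀.ne'
    rw [← ih hb]
    have hmg : m + 1 ≤ 2 * g := by
      rify
      nlinarith [a.2.2]
    refine (polar_eq_of_areGluedAngles (j := m / 2) ⟨by omega, ?_, ?_, by linarith⟩).symm <;>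
      rw [hb] <;> norm_cast <;> omega

theorem polar_eq_vertex_of_turn_eq_one (hg : 1 ≤ g) {a : I} (h : turn (2 * g * a) = 1) :
    polar g (a, 1) = vertex g := by
  obtain ⟨m, hm⟩ := turn_eq_turn_iff.mp (h.trans turn_zero.symm)
  rw [zero_add] at hm
  have hm₀ : 0 ≤ m := by
    have : 0 ≤ 2 * g * (a : ℝ) := mul_nonneg (by positivity) a.2.1
    rify
    linarith
  lift m to ℕ using hm₀
  exact polar_eq_vertex_of_natCast hg (by exact_mod_cast hm)

theorem polar_eq_of_mem_edgePair (hg : 1 ≤ g) {j : Fin g} {a a' : I} (hle : a ≤ a')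
    (h : 2 * g * (a : ℝ) ∈ Set.Ioo (2 * j : ℝ) (2 * j + 2))
    (h' : 2 * g * (a' : ℝ) ∈ Set.Ioo (2 * j : ℝ) (2 * j + 2))
    (hturn : turn (2 * g * a) = turn (2 * g * a')) : polar g (a, 1) = polar g (a', 1) := by
  have hg₀ : (0 : ℝ) < 2 * g := by positivity
  have hmul : 2 * g * (a : ℝ) ≤ 2 * g * a' := mul_le_mul_of_nonneg_left hle hg₀.le
  obtain ⟨m, hm⟩ := turn_eq_turn_iff.mp hturn
  have hm₀ : m ≤ 0 := by
    rify
    linarith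
  have hm₂ : -2 < m := by
    rify
    linarith [h.1, h'.2]
  obtain rfl | rfl : m = -1 ∨ m = 0 := by omega
  · push_cast at hm
    exact polar_eq_of_areGluedAngles ⟨j.2, h.1.le, by linarith [h'.2], by linarith⟩
  · rw [Int.cast_zero, add_zero] at hm
    rw [show a = a' from Subtype.ext (mul_left_cancel₀ hg₀.ne' hm)]

theorem polar_eq_of_pairTurn_eq (hg : 1 ≤ g) {a a' : I}
    (h : ∀ j : Fin g, pairTurn j (2 * g * a) = pairTurn j (2 * g * a')) :
    polar g (a, 1) = polar g (a', 1) := by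
  wlog hne : turn (2 * g * a) ≠ 1 generalizing a a'
  · rw [not_not] at hne
    by_cases hne' : turn (2 * g * a') = 1
    · rw [polar_eq_vertex_of_turn_eq_one hg hne, polar_eq_vertex_of_turn_eq_one hg hne']
    · exact (this (fun j ↦ (h j).symm) hne').symm
  obtain ⟨j, hj⟩ := exists_mem_Icc_edgePair hg a
  have hpair : pairTurn j (2 * g * a) ≠ 1 := by rwa [pairTurn_of_mem hj]
  have hpair' : pairTurn j (2 * g * a') ≠ 1 := h j ▸ hpair
  have hmem := mem_Ioo_of_pairTurn_ne_one hpair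
  have hmem' := mem_Ioo_of_pairTurn_ne_one hpair'
  have hturn : turn (2 * g * a) = turn (2 * g * a') := by
    rw [← pairTurn_of_mem hj, h j, pairTurn_of_mem (Set.Ioo_subset_Icc_self hmem')]
  rcases le_total a a' with hle | hle
  · exact polar_eq_of_mem_edgePair hg hle hmem hmem' hturn
  · exact (polar_eq_of_mem_edgePair hg hle hmem' hmem hturn.symm).symm

/-- A map from the surface, written in polar coordinates, to a Hausdorff space. The second component
separates the interior points and the third one the boundary points. -/
def separatingMap (g : ℕ) (p : I × I) : ℝ × ℂ × (Fin g → ℂ) :=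
  (p.2, (1 - (p.2 : ℝ) : ℝ) * ((p.2 : ℝ) * turn p.1),
    fun j ↦ (p.2 : ℝ) * (pairTurn j (2 * g * p.1) - 1))

theorem continuous_separatingMap (g : ℕ) : Continuous (separatingMap g) := by
  unfold separatingMap
  fun_prop

theorem isCompatible_separatingMap (g : ℕ) : IsCompatible g (separatingMap g) where
  center a a' := by simp [separatingMap]
  seam b := by
    have h₀ (j : ℕ) : pairTurn j 0 = 1 := pairTurn_of_turn_eq_one j turn_zero
    have h₁ (j : ℕ) : pairTurn j (2 * g) = 1 :=
      pairTurn_of_turn_eq_one j (by exact_mod_cast turn_natCast (2 * g))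
    simp [separatingMap, h₀, h₁]
  edge j a a' h := by simp [separatingMap, pairTurn_eq_of_areGluedAngles h]

theorem polar_eq_of_separatingMap_eq (hg : 1 ≤ g) {p q : I × I}
    (h : separatingMap g p = separatingMap g q) : polar g p = polar g q := by
  obtain ⟨a, b⟩ := p
  obtain ⟨a', b'⟩ := q
  simp only [separatingMap, Prod.mk.injEq] at h
  obtain ⟨hradius, hinterior, hboundary⟩ := h
  obtain rfl : b = b' := Subtype.ext hradius
  by_cases hb : b = 1
  · subst hb
    refine polar_eq_of_pairTurn_eq hg fun j ↦ ?_
    simpa using congrFun hboundary j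
  · have hb' : ((1 - (b : ℝ) : ℝ) : ℂ) ≠ 0 := by
      rw [Complex.ofReal_ne_zero, sub_ne_zero]
      exact fun e ↦ hb (Subtype.ext e.symm)
    exact congrArg (mk g) (Subtype.ext (mul_left_cancel₀ hb' hinterior))

theorem t2Space (hg : 1 ≤ g) : T2Space (Ng g) := by
  have hcompat := isCompatible_separatingMap g
  let π : C(I × I, Ng g) := ⟨polar g, continuous_polar g⟩
  have hπ : Topology.IsQuotientMap π := isQuotientMap_polar g
  let f : C(I × I, ℝ × ℂ × (Fin g → ℂ)) := ⟨separatingMap g, continuous_separatingMap g⟩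
  have hf (p q : I × I) (h : π p = π q) : f p = f q := hcompat.eq_of_polar_eq h
  let F : C(Ng g, ℝ × ℂ × (Fin g → ℂ)) := hπ.lift f hf
  have hF (p : I × I) : F (polar g p) = separatingMap g p :=
    DFunLike.congr_fun (hπ.lift_comp f hf) p
  refine T2Space.of_injective_continuous (f := F) ?_ F.continuous
  intro x y h
  obtain ⟨p, rfl⟩ := (isQuotientMap_polar g).surjective x
  obtain ⟨q, rfl⟩ := (isQuotientMap_polar g).surjective y
  exact polar_eq_of_separatingMap_eq hg (by simpa only [hF] using h)

end Ng

/-! ### Symmetric products -/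

theorem spRel_equivalence (n : ℕ) (X : Type*) : Equivalence (spRel n X) where
  refl s := ⟨1, rfl⟩
  symm := by
    rintro s t ⟨e, rfl⟩
    exact ⟨e⁻¹, by ext i; simp⟩
  trans := by
    rintro s t u ⟨e, rfl⟩ ⟨f, rfl⟩
    exact ⟨e * f, rfl⟩

namespace SP

variable {n : ℕ} {X : Type*} [TopologicalSpace X]

/-- The unordered tuple of points underlying an ordered one. -/
def mk (s : Fin n → X) : SP n X := Quot.mk _ s

theorem mk_eq_mk_iff {s t : Fin n → X} : mk s = mk t ↔ ∃ e : Equiv.Perm (Fin n), s ∘ e = t :=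
  (spRel_equivalence n X).quot_mk_eq_iff s t

theorem isQuotientMap_mk : Topology.IsQuotientMap (mk : (Fin n → X) → SP n X) :=
  isQuotientMap_quot_mk

theorem isOpenQuotientMap_mk : IsOpenQuotientMap (mk : (Fin n → X) → SP n X) := by
  refine ⟨isQuotientMap_mk.surjective, isQuotientMap_mk.continuous, fun U hU ↦ ?_⟩
  have hpreimage : mk ⁻¹' (mk '' U) = ⋃ e : Equiv.Perm (Fin n), (· ∘ e) ⁻¹' U := by
    ext t
    simp only [Set.mem_preimage, Set.mem_image, Set.mem_iUnion, eq_comm (b := mk t), mk_eq_mk_iff]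
    exact ⟨fun ⟨_, hs, e, he⟩ ↦ ⟨e, he ▸ hs⟩, fun ⟨e, he⟩ ↦ ⟨_, he, e, rfl⟩⟩
  rw [← isQuotientMap_mk.isOpen_preimage, hpreimage]
  exact isOpen_iUnion fun e ↦ hU.preimage (by fun_prop)

instance [T2Space X] : T2Space (SP n X) := by
  rw [t2Space_iff_of_isOpenQuotientMap isOpenQuotientMap_mk]
  simp only [mk_eq_mk_iff, Set.ofPred_exists]
  exact isClosed_iUnion_of_finite fun e ↦ isClosed_eq (by fun_prop) continuous_snd

instance [CompactSpace X] : CompactSpace (SP n X) :=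
  inferInstanceAs (CompactSpace (Quot (spRel n X)))

end SP

/-! ### The double covering by nonzero functions -/

/-- The nonzero real functions on `α`, the total space of a double covering of a model of the
projective space of functions on `α`. -/
abbrev NonzeroFun (α : Type*) : Type _ := {f : α → ℝ // f ≠ 0}

namespace NonzeroFun

variable {α : Type*}

instance : MulAction ℤˣ (NonzeroFun α) where
  smul s f := ⟨s • f.1, (smul_ne_zero_iff_ne s).mpr f.2⟩
  one_smul f := Subtype.ext (one_smul ℤˣ f.1)
  mul_smul s t f := Subtype.ext (mul_smul s t f.1)

theorem smul_apply (s : ℤˣ) (f : NonzeroFun α) (t : α) : (s • f).1 t = s • f.1 t := rfl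

theorem neg_one_smul_apply (f : NonzeroFun α) (t : α) : ((-1 : ℤˣ) • f).1 t = -f.1 t := by
  simp [smul_apply, Units.smul_def]

theorem continuous_eval (t : α) : Continuous fun f : NonzeroFun α ↦ f.1 t :=
  (continuous_apply t).comp continuous_subtype_val

instance : ContinuousConstSMul ℤˣ (NonzeroFun α) where
  continuous_const_smul s :=
    Continuous.subtype_mk (continuous_pi fun t ↦ (continuous_eval t).const_smul s) _

theorem exists_apply_ne_zero (f : NonzeroFun α) : ∃ t, f.1 t ≠ 0 := Function.ne_iff.mp f.2

/-- The functions `F (x, y) = f x * f y` with `f` nonzero. As `F` determines `f` up to sign, this is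
the quotient of the nonzero functions by the sign. -/
abbrev TensorSquare (α : Type*) : Type _ :=
  Set.range fun (f : NonzeroFun α) (x : α × α) ↦ f.1 x.1 * f.1 x.2

/-- The function `(x, y) ↦ f x * f y`. -/
def square (f : NonzeroFun α) : TensorSquare α := ⟨_, f, rfl⟩

theorem square_apply (f : NonzeroFun α) (x : α × α) : (square f).1 x = f.1 x.1 * f.1 x.2 := rfl

theorem square_surjective : Function.Surjective (square : NonzeroFun α → TensorSquare α) := by
  rintro ⟨_, f, rfl⟩
  exact ⟨f, rfl⟩

theorem continuous_square : Continuous (square : NonzeroFun α → TensorSquare α) :=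
  Continuous.subtype_mk
    (continuous_pi fun x : α × α ↦ (continuous_eval x.1).mul (continuous_eval x.2)) _

theorem continuous_tensorSquare_eval (x : α × α) : Continuous fun F : TensorSquare α ↦ F.1 x :=
  (continuous_apply x).comp continuous_subtype_val

theorem square_smul (s : ℤˣ) (f : NonzeroFun α) : square (s • f) = square f := by
  ext x
  rcases Int.units_eq_one_or s with rfl | rfl <;> simp [square_apply, neg_one_smul_apply]

theorem eq_or_eq_neg_of_square_eq {f h : NonzeroFun α} (e : square f = square h) :
    f = h ∨ f = (-1 : ℤˣ) • h := by
  have hmul (x y : α) : f.1 x * f.1 y = h.1 x * h.1 y :=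
    congrFun (congrArg Subtype.val e) (x, y)
  obtain ⟨t, ht⟩ := f.exists_apply_ne_zero
  rcases mul_self_eq_mul_self_iff.mp (hmul t t) with hft | hft
  · refine .inl (Subtype.ext (funext fun x ↦ mul_right_cancel₀ ht ?_))
    rw [hmul, hft]
  · refine .inr (Subtype.ext (funext fun x ↦ mul_right_cancel₀ ht ?_))
    rw [hmul, neg_one_smul_apply, hft, neg_mul_neg]

/-- The normalised section `F ↦ F (·, t) / √F (t, t)` of the double covering over the open set where
`F (t, t) > 0`. -/
def localSection (t : α) (F : {F : TensorSquare α // 0 < F.1 (t, t)}) : NonzeroFun α :=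
  ⟨fun x ↦ F.1.1 (x, t) / √(F.1.1 (t, t)),
    fun h ↦ (div_pos F.2 (Real.sqrt_pos.mpr F.2)).ne' (congrFun h t)⟩

theorem continuous_localSection (t : α) : Continuous (localSection t) := by
  have heval (x : α × α) :
      Continuous fun F : {F : TensorSquare α // 0 < F.1 (t, t)} ↦ F.1.1 x :=
    (continuous_tensorSquare_eval x).comp continuous_subtype_val
  exact Continuous.subtype_mk (continuous_pi fun x ↦
    (heval (x, t)).div₀ (heval (t, t)).sqrt fun F ↦ (Real.sqrt_pos.mpr F.2).ne') _

theorem square_localSection (t : α) (F : {F : TensorSquare α // 0 < F.1 (t, t)}) :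
    square (localSection t F) = F.1 := by
  obtain ⟨⟨_, f, rfl⟩, hf⟩ := F
  have hf : 0 < f.1 t * f.1 t := hf
  have ht : f.1 t ≠ 0 := mul_self_pos.mp hf
  ext ⟨x, y⟩
  change f.1 x * f.1 t / √(f.1 t * f.1 t) * (f.1 y * f.1 t / √(f.1 t * f.1 t)) = f.1 x * f.1 y
  rw [div_mul_div_comm, Real.mul_self_sqrt hf.le]
  field_simp

theorem isQuotientMap_square :
    Topology.IsQuotientMap (square : NonzeroFun α → TensorSquare α) := by
  refine ⟨.of_isOpen_preimage_iff_isOpen fun s ↦ ⟨fun hs ↦ ?_, fun h ↦ h.preimage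
    continuous_square⟩, square_surjective⟩
  refine isOpen_iff_mem_nhds.mpr fun F hF ↦ ?_
  obtain ⟨f, rfl⟩ := square_surjective F
  obtain ⟨t, ht⟩ := f.exists_apply_ne_zero
  have hdomain : IsOpen {F : TensorSquare α | 0 < F.1 (t, t)} :=
    isOpen_lt continuous_const (continuous_tensorSquare_eval _)
  have hopen : IsOpen (Subtype.val '' (localSection t ⁻¹' (square ⁻¹' s))) :=
    hdomain.isOpenMap_subtype_val _ (hs.preimage (continuous_localSection t))
  refine Filter.mem_of_superset (hopen.mem_nhds
    ⟨⟨square f, mul_self_pos.mpr ht⟩, ?_, rfl⟩) ?_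
  · rwa [Set.mem_preimage, Set.mem_preimage, square_localSection]
  · rintro _ ⟨F, hF, rfl⟩
    rwa [Set.mem_preimage, Set.mem_preimage, square_localSection] at hF

theorem isQuotientCoveringMap_square :
    IsQuotientCoveringMap (square : NonzeroFun α → TensorSquare α) ℤˣ where
  toIsQuotientMap := isQuotientMap_square
  apply_eq_iff_mem_orbit := by
    intro f h
    constructor
    · intro e
      rcases eq_or_eq_neg_of_square_eq e with rfl | rfl
      exacts [MulAction.mem_orbit_self _, MulAction.mem_orbit _ _]
    · rintro ⟨s, rfl⟩
      exact square_smul s h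
  disjoint f := by
    obtain ⟨t, ht⟩ := f.exists_apply_ne_zero
    refine ⟨{h | 0 < h.1 t * f.1 t}, (isOpen_lt continuous_const
      ((continuous_eval t).mul continuous_const)).mem_nhds (mul_self_pos.mpr ht), ?_⟩
    rintro s ⟨_, ⟨h, hh, rfl⟩, hsh⟩
    rcases Int.units_eq_one_or s with rfl | rfl
    · rfl
    · have hh : 0 < h.1 t * f.1 t := hh
      have hsh : 0 < ((-1 : ℤˣ) • h).1 t * f.1 t := hsh
      rw [neg_one_smul_apply] at hsh
      linarith

end NonzeroFun

/-! ### Signed labels from a categorical cover -/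

/-- A null-homotopy of `U` contracts the pullback to `q ⁻¹' U` of a covering of the ambient space
into a single fibre, equivariantly under the deck transformations. -/
theorem exists_equivariant_of_nullhomotopic {E B Y Q G : Type*} [TopologicalSpace E]
    [TopologicalSpace B] [TopologicalSpace Y] [TopologicalSpace Q] [Group G] [MulAction G E]
    {p : E → B} (hp : IsQuotientCoveringMap p G) {c : C(Y, B)} {q : C(Q, Y)} {Φ : C(Q, E)}
    (hc : ∀ y, c (q y) = p (Φ y)) {U : Set Y} (hU : (inclMap U).Nullhomotopic) :
    ∃ (b : B) (h : C(q ⁻¹' U, E)), (∀ y, p (h y) = b) ∧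
      ∀ (s : G) (y y' : q ⁻¹' U), q y = q y' → Φ y' = s • Φ y → h y' = s • h y := by
  obtain ⟨y₀, ⟨H⟩⟩ := hU
  have hcov := hp.isCoveringMap
  let K : C(I × (q ⁻¹' U), B) :=
    ⟨fun x ↦ c (H (x.1, U.restrictPreimage q x.2)), by fun_prop⟩
  let Φ₀ : C(q ⁻¹' U, E) := ⟨fun y ↦ Φ y.1, by fun_prop⟩
  have hK₀ (y : q ⁻¹' U) : K (0, y) = p (Φ₀ y) := by
    change c (H (0, U.restrictPreimage q y)) = p (Φ y)
    rw [H.apply_zero, ← hc]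
    rfl
  let L := hcov.liftHomotopy K Φ₀ hK₀
  have hL (x : I × (q ⁻¹' U)) : p (L x) = K x := congrFun (hcov.liftHomotopy_lifts K Φ₀ hK₀) x
  have hL₀ (y : q ⁻¹' U) : L (0, y) = Φ y := hcov.liftHomotopy_zero K Φ₀ hK₀ y
  refine ⟨c y₀, ⟨fun y ↦ L (1, y), by fun_prop⟩, fun y ↦ (hL _).trans ?_, fun s y y' hq hΦ ↦ ?_⟩
  · change c (H (1, U.restrictPreimage q y)) = c y₀
    rw [H.apply_one]
    rfl
  · have := hp.toContinuousConstSMul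
    have hqU : U.restrictPreimage q y = U.restrictPreimage q y' := Subtype.ext hq
    refine congrFun (hcov.eq_of_comp_eq (g₁ := fun t : I ↦ L (t, y'))
      (g₂ := fun t : I ↦ s • L (t, y)) (by fun_prop) (by fun_prop) ?_ 0 ?_) 1
    · ext t
      have hs (x : E) : p (s • x) = p x := hp.apply_eq_iff_mem_orbit.mpr (MulAction.mem_orbit x s)
      change p (L (t, y')) = p (s • L (t, y))
      rw [hs, hL, hL]
      change c (H (t, U.restrictPreimage q y')) = c (H (t, U.restrictPreimage q y))
      rw [hqU]
    · rw [hL₀, hL₀, hΦ]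

theorem continuous_decide_pos {X : Type*} [TopologicalSpace X] {k : X → ℝ} (hk : Continuous k)
    (hk₀ : ∀ x, k x ≠ 0) : Continuous fun x ↦ decide (0 < k x) := by
  have hnonneg : {x | 0 < k x} = {x | 0 ≤ k x} := Set.ext fun x ↦ (hk₀ x).symm.le_iff_lt.symm
  have hpreimage : (fun x ↦ decide (0 < k x)) ⁻¹' {true} = {x | 0 < k x} := by
    ext x
    simp
  rw [continuous_bool_rng true, hpreimage]
  exact ⟨hnonneg ▸ isClosed_le continuous_const hk, isOpen_lt continuous_const hk⟩

theorem exists_sign_of_nullhomotopic {α Y Q : Type*} [TopologicalSpace Y] [TopologicalSpace Q]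
    {c : C(Y, NonzeroFun.TensorSquare α)} {q : C(Q, Y)} {Φ : C(Q, NonzeroFun α)}
    (hc : ∀ y, c (q y) = NonzeroFun.square (Φ y)) {U : Set Y} (hU : (inclMap U).Nullhomotopic) :
    ∃ sgn : Q → Bool, ContinuousOn sgn (q ⁻¹' U) ∧ ∀ y y', q y ∈ U → q y = q y' →
      (Φ y' = Φ y → sgn y' = sgn y) ∧ (Φ y' = (-1 : ℤˣ) • Φ y → sgn y' = !sgn y) := by
  obtain ⟨b, h, hb, hequiv⟩ :=
    exists_equivariant_of_nullhomotopic NonzeroFun.isQuotientCoveringMap_square hc hU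
  obtain ⟨f, rfl⟩ := NonzeroFun.square_surjective b
  obtain ⟨t, ht⟩ := f.exists_apply_ne_zero
  let k : q ⁻¹' U → ℝ := fun y ↦ (h y).1 t
  have hk : Continuous k := (NonzeroFun.continuous_eval t).comp h.continuous
  have hk₀ (y : q ⁻¹' U) : k y ≠ 0 := by
    rcases NonzeroFun.eq_or_eq_neg_of_square_eq (hb y) with e | e
    · simpa only [k, e] using ht
    · simpa only [k, e, NonzeroFun.neg_one_smul_apply, neg_ne_zero] using ht
  classical
  let sgn (y : Q) : Bool := if hy : q y ∈ U then decide (0 < k ⟨y, hy⟩) else true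
  have hsgn {y : Q} (hy : q y ∈ U) : sgn y = decide (0 < k ⟨y, hy⟩) := dif_pos hy
  refine ⟨sgn, ?_, fun y y' hy hq ↦ ?_⟩
  · rw [continuousOn_iff_continuous_domRestrict]
    exact (continuous_decide_pos hk hk₀).congr fun y ↦ (hsgn y.2).symm
  · have hy' : q y' ∈ U := hq ▸ hy
    rw [hsgn hy, hsgn hy']
    refine ⟨fun hΦ ↦ ?_, fun hΦ ↦ ?_⟩
    · have : h ⟨y', hy'⟩ = h ⟨y, hy⟩ := by
        simpa using hequiv 1 ⟨y, hy⟩ ⟨y', hy'⟩ hq (by simpa using hΦ)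
      simp only [k, this]
    · have : k ⟨y', hy'⟩ = -k ⟨y, hy⟩ := by
        simp only [k, hequiv (-1) ⟨y, hy⟩ ⟨y', hy'⟩ hq hΦ, NonzeroFun.neg_one_smul_apply]
      rcases (hk₀ ⟨y, hy⟩).lt_or_gt with hneg | hpos
      · simp [this, hneg, hneg.le]
      · simp [this, hpos, hpos.le]

open scoped Uniformity in
theorem eventually_uniformity_eq_of_continuousOn {Q β : Type*} [UniformSpace Q]
    [TopologicalSpace β] [DiscreteTopology β] {s : Set Q} (hs : IsCompact s) {f : Q → β}
    (hf : ContinuousOn f s) : ∀ᶠ p in 𝓤 Q, p.1 ∈ s → p.2 ∈ s → f p.1 = f p.2 := by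
  obtain rfl : ‹TopologicalSpace β› = ⊥ := DiscreteTopology.eq_bot
  let : UniformSpace β := ⊥
  have hdiag := hs.uniformContinuousOn_of_continuous hf (DiscreteUniformity.relId_mem_uniformity β)
  filter_upwards [Filter.mem_inf_principal.mp hdiag] with p hp h₁ h₂ using hp ⟨h₁, h₂⟩

open scoped Uniformity in
/-- Over a cover by null-homotopic sets the pulled back double covering is trivial, and a choice of
sheet gives the sign of the label. -/
theorem exists_labelling_of_catLE {α Y Q : Type*} [TopologicalSpace Y] [NormalSpace Y]
    [UniformSpace Q] [CompactSpace Q] {c : C(Y, NonzeroFun.TensorSquare α)} {q : C(Q, Y)}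
    {Φ : C(Q, NonzeroFun α)} (hc : ∀ y, c (q y) = NonzeroFun.square (Φ y)) {r : ℕ}
    (hr : catLE Y r) :
    ∃ lab : Q → SignedLabel (Fin (r + 1)),
      (∀ y y', q y = q y' → Φ y' = Φ y → lab y' = lab y) ∧
      (∀ y y', q y = q y' → Φ y' = (-1 : ℤˣ) • Φ y → lab y' = (lab y).neg) ∧
      ∀ᶠ p in 𝓤 Q, (lab p.1).key = (lab p.2).key → lab p.1 = lab p.2 := by
  obtain ⟨U, hUopen, hUcover, hUnull⟩ := hr
  obtain ⟨K, hKcover, hKclosed, hKU⟩ :=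
    exists_iUnion_eq_closed_subset hUopen (fun _ ↦ Set.toFinite _) hUcover
  choose sgn hcont hsgn using fun i ↦ exists_sign_of_nullhomotopic hc (hUnull i)
  choose idx hidx using fun ξ : Y ↦ Set.mem_iUnion.mp (hKcover ▸ Set.mem_univ ξ)
  let lab (y : Q) : SignedLabel (Fin (r + 1)) := toLex (idx (q y), sgn (idx (q y)) y)
  have hidxU (y : Q) : q y ∈ U (idx (q y)) := hKU _ (hidx _)
  refine ⟨lab, fun y y' hq hΦ ↦ ?_, fun y y' hq hΦ ↦ ?_, ?_⟩
  · simp only [lab, ← hq, (hsgn _ y y' (hidxU y) hq).1 hΦ]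
  · simp only [lab, ← hq, (hsgn _ y y' (hidxU y) hq).2 hΦ]
    rfl
  · have hnear (i : Fin (r + 1)) : ∀ᶠ p in 𝓤 Q,
        p.1 ∈ q ⁻¹' K i → p.2 ∈ q ⁻¹' K i → sgn i p.1 = sgn i p.2 :=
      eventually_uniformity_eq_of_continuousOn ((hKclosed i).preimage q.continuous).isCompact
        ((hcont i).mono (Set.preimage_mono (hKU i)))
    filter_upwards [Filter.eventually_all.mpr hnear] with p hp hkey
    have hkey : idx (q p.1) = idx (q p.2) := hkey
    have hsgn := hp (idx (q p.2)) (hkey ▸ hidx _) (hidx _)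
    simp only [lab, hkey, hsgn]

/-! ### The classifying map of the double covering of the symmetric product -/

namespace Ng

variable {n g : ℕ}

/-- The map `N_g → ℝP²` collapsing all pairs of edges but the first, in polar coordinates on the
source and as a point of the unit disc on the target. -/
def collapse (g : ℕ) (p : I × I) : ℂ := (p.2 : ℝ) * turn (min (g * p.1) 1)

@[fun_prop]
theorem continuous_collapse (g : ℕ) : Continuous (collapse g) := by
  unfold collapse
  fun_prop

open Polynomial in
/-- The map `collapse` in homogeneous coordinates, viewing `ℝP²` as the projective space of
polynomials of degree at most two. Antipodal points of the boundary circle give opposite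
polynomials. -/
def quadratic (g : ℕ) (p : I × I) : ℝ[X] :=
  C (collapse g p).re + C (collapse g p).im * X + C (1 - (p.2 : ℝ)) * X ^ 2

theorem eval_quadratic (p : I × I) (t : ℝ) : (quadratic g p).eval t =
    (collapse g p).re + (collapse g p).im * t + (1 - (p.2 : ℝ)) * t ^ 2 := by
  simp [quadratic]

theorem continuous_eval_quadratic (g : ℕ) (t : ℝ) :
    Continuous fun p ↦ (quadratic g p).eval t := by
  simp only [eval_quadratic]
  have hre := Complex.continuous_re.comp (continuous_collapse g)
  have him := Complex.continuous_im.comp (continuous_collapse g)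
  simp only [Function.comp_def] at hre him
  fun_prop

theorem quadratic_ne_zero (p : I × I) : quadratic g p ≠ 0 := by
  intro h
  have heval (t : ℝ) :
      (collapse g p).re + (collapse g p).im * t + (1 - (p.2 : ℝ)) * t ^ 2 = 0 := by
    rw [← eval_quadratic, h, Polynomial.eval_zero]
  have h₀ := heval 0
  have h₁ := heval 1
  have h₂ := heval (-1)
  have hcollapse : collapse g p = 0 :=
    Complex.ext (by rw [Complex.zero_re]; linarith) (by rw [Complex.zero_im]; linarith)
  have hradius : (p.2 : ℝ) = 1 := by linarith
  have hnorm : ‖collapse g p‖ = 1 := by simp [collapse, hradius, norm_turn]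
  simp [hcollapse] at hnorm

theorem quadratic_center (a a' : I) : quadratic g (a, 0) = quadratic g (a', 0) := by
  simp [quadratic, collapse]

theorem quadratic_seam (hg : 1 ≤ g) (b : I) : quadratic g (0, b) = quadratic g (1, b) := by
  have hg : (1 : ℝ) ≤ g := by exact_mod_cast hg
  have hcollapse : collapse g (0, b) = collapse g (1, b) := by
    simp [collapse, hg, turn_zero, turn_one]
  simp only [quadratic, hcollapse]

theorem quadratic_eq_neg_of_areGluedAngles {a a' : I} (h : AreGluedAngles g 0 a a') :
    quadratic g (a', 1) = -quadratic g (a, 1) := by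
  have hleft : 2 * g * (a : ℝ) ≤ 1 := by simpa using h.left_le
  have hright : (g : ℝ) * a' = g * a + 1 / 2 := by linarith [h.right_eq]
  have hcollapse : collapse g (a', 1) = -collapse g (a, 1) := by
    simp only [collapse, Set.Icc.coe_one]
    rw [min_eq_left (by linarith), min_eq_left (by linarith), hright, turn_add_half]
    simp
  simp only [quadratic, hcollapse, Set.Icc.coe_one, sub_self, Complex.neg_re, Complex.neg_im,
    map_neg, map_zero]
  ring

theorem quadratic_eq_of_areGluedAngles {j : ℕ} (hj : 1 ≤ j) {a a' : I}
    (h : AreGluedAngles g j a a') : quadratic g (a', 1) = quadratic g (a, 1) := by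
  have hj : (1 : ℝ) ≤ j := by exact_mod_cast hj
  have hcollapse : collapse g (a', 1) = collapse g (a, 1) := by
    simp only [collapse, Set.Icc.coe_one]
    rw [min_eq_right (by linarith [h.le_left, h.right_eq]),
      min_eq_right (by linarith [h.le_left])]
  simp only [quadratic, hcollapse]

/-- The product of the quadratic polynomials of `n` points, a lift of the resulting map
`SPⁿ(N_g) → ℝP²ⁿ` to the double covering of `ℝP²ⁿ`. -/
def quadraticProd (g : ℕ) (p : Fin n → I × I) : NonzeroFun ℝ :=
  ⟨fun t ↦ (∏ k, quadratic g (p k)).eval t, fun h ↦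
    Finset.prod_ne_zero_iff.mpr (fun k _ ↦ quadratic_ne_zero (p k))
      (Polynomial.funext fun t ↦ by simpa using congrFun h t)⟩

theorem quadraticProd_apply (p : Fin n → I × I) (t : ℝ) :
    (quadraticProd g p).1 t = ∏ k, (quadratic g (p k)).eval t :=
  Polynomial.eval_prod _ _ _

theorem continuous_quadraticProd :
    Continuous (quadraticProd g : (Fin n → I × I) → NonzeroFun ℝ) := by
  refine Continuous.subtype_mk (continuous_pi fun t ↦ ?_) _
  simp only [Polynomial.eval_prod]
  exact continuous_finsetProd _ fun k _ ↦
    (continuous_eval_quadratic g t).comp (continuous_apply k)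

theorem quadraticProd_comp_perm (p : Fin n → I × I) (e : Equiv.Perm (Fin n)) :
    quadraticProd g (p ∘ e) = quadraticProd g p :=
  Subtype.ext (congrArg (fun P t ↦ Polynomial.eval t P)
    (Equiv.prod_comp e fun k ↦ quadratic g (p k)))

theorem quadraticProd_update_of_eq {p : Fin n → I × I} {j : Fin n} {x : I × I}
    (h : quadratic g x = quadratic g (p j)) :
    quadraticProd g (Function.update p j x) = quadraticProd g p := by
  have hcongr (k : Fin n) : quadratic g (Function.update p j x k) = quadratic g (p k) := by
    rcases eq_or_ne k j with rfl | hk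
    · rwa [Function.update_self]
    · rw [Function.update_of_ne hk]
  simp only [quadraticProd, hcongr]

theorem quadraticProd_update_of_eq_neg {p : Fin n → I × I} {j : Fin n} {x : I × I}
    (h : quadratic g x = -quadratic g (p j)) :
    quadraticProd g (Function.update p j x) = (-1 : ℤˣ) • quadraticProd g p := by
  ext t
  have hcongr (k : Fin n) (hk : k ∈ Finset.univ.erase j) :
      (quadratic g (Function.update p j x k)).eval t = (quadratic g (p k)).eval t := by
    rw [Function.update_of_ne (Finset.ne_of_mem_erase hk)]
  rw [NonzeroFun.neg_one_smul_apply, quadraticProd_apply, quadraticProd_apply,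
    ← Finset.mul_prod_erase _ _ (Finset.mem_univ j), Finset.prod_congr rfl hcongr,
    ← Finset.mul_prod_erase _ (fun k ↦ (quadratic g (p k)).eval t) (Finset.mem_univ j),
    Function.update_self, h, Polynomial.eval_neg, neg_mul]

theorem isCompatible_quadratic_mul (hg : 1 ≤ g) :
    IsCompatible g fun p (x : ℝ × ℝ) ↦ (quadratic g p).eval x.1 * (quadratic g p).eval x.2 where
  center a a' := by simp only [quadratic_center a a']
  seam b := by simp only [quadratic_seam hg b]
  edge j a a' h := by
    rcases Nat.eq_zero_or_pos j with rfl | hj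
    · simp only [quadratic_eq_neg_of_areGluedAngles h, Polynomial.eval_neg, neg_mul_neg]
    · simp only [quadratic_eq_of_areGluedAngles hj h]

theorem exists_continuousMap_quadratic_mul (hg : 1 ≤ g) : ∃ G : C(Ng g, ℝ × ℝ → ℝ),
    ∀ p x, G (polar g p) x = (quadratic g p).eval x.1 * (quadratic g p).eval x.2 := by
  let f : C(I × I, ℝ × ℝ → ℝ) :=
    ⟨fun p x ↦ (quadratic g p).eval x.1 * (quadratic g p).eval x.2,
      continuous_pi fun x ↦ (continuous_eval_quadratic g x.1).mul (continuous_eval_quadratic g x.2)⟩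
  let π : C(I × I, Ng g) := ⟨polar g, continuous_polar g⟩
  have hπ : Topology.IsQuotientMap π := isQuotientMap_polar g
  have hf (p q : I × I) : π p = π q → f p = f q := (isCompatible_quadratic_mul hg).eq_of_polar_eq
  exact ⟨hπ.lift f hf, fun p ↦ congrFun (DFunLike.congr_fun (hπ.lift_comp f hf) p)⟩

theorem exists_continuousMap_square_quadraticProd (hg : 1 ≤ g) :
    ∃ c : C(SP n (Ng g), NonzeroFun.TensorSquare ℝ), ∀ p : Fin n → I × I,
      c (SP.mk fun k ↦ polar g (p k)) = NonzeroFun.square (quadraticProd g p) := by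
  obtain ⟨G, hG⟩ := exists_continuousMap_quadratic_mul hg
  let m (s : Fin n → Ng g) (x : ℝ × ℝ) : ℝ := ∏ k, G (s k) x
  have hm : Continuous m := continuous_pi fun x ↦ continuous_finsetProd _ fun k _ ↦
    (continuous_apply x).comp (G.continuous.comp (continuous_apply k))
  have hm_polar (p : Fin n → I × I) :
      m (fun k ↦ polar g (p k)) = (NonzeroFun.square (quadraticProd g p)).1 := by
    ext x
    rw [NonzeroFun.square_apply, quadraticProd_apply, quadraticProd_apply,
      ← Finset.prod_mul_distrib]
    exact Finset.prod_congr rfl fun k _ ↦ hG _ _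
  have hm_mem (s : Fin n → Ng g) :
      m s ∈ Set.range fun (f : NonzeroFun ℝ) (x : ℝ × ℝ) ↦ f.1 x.1 * f.1 x.2 := by
    choose p hp using fun k ↦ (isQuotientMap_polar g).surjective (s k)
    obtain rfl : (fun k ↦ polar g (p k)) = s := funext hp
    exact hm_polar p ▸ (NonzeroFun.square (quadraticProd g p)).2
  have hm_rel (s t : Fin n → Ng g) (h : spRel n (Ng g) s t) : m s = m t := by
    obtain ⟨e, rfl⟩ := h
    ext x
    exact (Equiv.prod_comp e fun k ↦ G (s k) x).symm
  exact ⟨⟨Quot.lift (fun s ↦ ⟨m s, hm_mem s⟩) fun s t h ↦ Subtype.ext (hm_rel s t h),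
    continuous_quot_lift _ (hm.subtype_mk hm_mem)⟩, fun p ↦ Subtype.ext (hm_polar p)⟩

end Ng

/-! ### The cube over the symmetric product -/

theorem Ng.isCompatible_polar (g : ℕ) : IsCompatible g (polar g) where
  center a a' := congrArg (mk g) (Subtype.ext (by simp [Disc.coe_polar]))
  seam b := congrArg (mk g) (Subtype.ext (by simp [Disc.coe_polar, turn_zero, turn_one]))
  edge _ _ _ h := polar_eq_of_areGluedAngles h

/-- The polar coordinates of the `n` points parametrised by a point of the cube. As the radii are
nondecreasing, the cube parametrises a fundamental domain of the action of `S_n`. -/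
def polarCoords {n : ℕ} (y : Coord n → I) (k : Fin n) : I × I :=
  (y (Sum.inl k), ∏ i ∈ Finset.Ici k, y (Sum.inr i))

section polarCoords

variable {n : ℕ} {y : Coord n → I} {j : Fin n}

theorem continuous_polarCoords : Continuous (polarCoords : (Coord n → I) → Fin n → I × I) :=
  continuous_pi fun _ ↦ (continuous_apply _).prodMk
    (continuous_finsetProd _ fun _ _ ↦ continuous_apply _)

theorem polarCoords_update (y : Coord n → I) (j : Fin n) (a : I) :
    polarCoords (Function.update y (Sum.inl j) a) =
      Function.update (polarCoords y) j (a, (polarCoords y j).2) := by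
  funext k
  rcases eq_or_ne k j with rfl | hk
  · simp [polarCoords]
  · simp [polarCoords, hk]

theorem polarCoords_of_inr_eq_zero (h : y (Sum.inr j) = 0) :
    polarCoords y j = (y (Sum.inl j), 0) :=
  Prod.ext rfl (Finset.prod_eq_zero (Finset.mem_Ici.mpr le_rfl) h)

theorem polarCoords_of_inr_eq_one (h : ∀ i, j ≤ i → y (Sum.inr i) = 1) :
    polarCoords y j = (y (Sum.inl j), 1) :=
  Prod.ext rfl (Finset.prod_eq_one fun i hi ↦ h i (Finset.mem_Ici.mp hi))

theorem polarCoords_comp_swap {j' : Fin n} (hj : (j' : ℕ) = j + 1) (h : y (Sum.inr j) = 1) :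
    polarCoords (y ∘ Equiv.swap (Sum.inl j) (Sum.inl j')) =
      polarCoords y ∘ Equiv.swap j j' := by
  have hIci : Finset.Ici j = insert j (Finset.Ici j') := by
    ext i
    simp only [Finset.mem_Ici, Finset.mem_insert, Fin.le_def, Fin.ext_iff]
    omega
  have hradius : (polarCoords y j).2 = (polarCoords y j').2 := by
    have hnotMem : j ∉ Finset.Ici j' := by
      rw [Finset.mem_Ici, Fin.le_def]
      omega
    simp only [polarCoords, hIci, Finset.prod_insert hnotMem, h, one_mul]
  have hinr (i : Fin n) : Equiv.swap (Sum.inl j) (Sum.inl j') (Sum.inr i) = Sum.inr i :=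
    Equiv.swap_apply_of_ne_of_ne Sum.inr_ne_inl Sum.inr_ne_inl
  funext k
  rcases eq_or_ne k j with rfl | hk
  · exact Prod.ext (by simp [polarCoords]) (by simpa [polarCoords, hinr] using hradius)
  rcases eq_or_ne k j' with rfl | hk'
  · exact Prod.ext (by simp [polarCoords]) (by simpa [polarCoords, hinr] using hradius.symm)
  · simp [polarCoords, Equiv.swap_apply_of_ne_of_ne, hk', hk]

/-- The map of the cube onto the symmetric product of the surface. -/
def symPolar (n g : ℕ) : C(Coord n → I, SP n (Ng g)) where
  toFun y := SP.mk fun k ↦ Ng.polar g (polarCoords y k)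
  continuous_toFun := SP.isQuotientMap_mk.continuous.comp <| continuous_pi fun k ↦
    (Ng.continuous_polar g).comp ((continuous_apply k).comp continuous_polarCoords)

/-- The lift of the map `SPⁿ(N_g) → ℝP²ⁿ`, composed with `symPolar`, to the double covering of
`ℝP²ⁿ`. -/
def polarLift (n g : ℕ) : C(Coord n → I, NonzeroFun ℝ) where
  toFun y := Ng.quadraticProd g (polarCoords y)
  continuous_toFun := Ng.continuous_quadraticProd.comp continuous_polarCoords

theorem symPolar_comp_swap (g : ℕ) {j' : Fin n} (hj : (j' : ℕ) = j + 1) (h : y (Sum.inr j) = 1) :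
    symPolar n g (y ∘ Equiv.swap (Sum.inl j) (Sum.inl j')) = symPolar n g y :=
  (SP.mk_eq_mk_iff.mpr ⟨Equiv.swap j j', by rw [polarCoords_comp_swap hj h]; rfl⟩).symm

theorem polarLift_comp_swap (g : ℕ) {j' : Fin n} (hj : (j' : ℕ) = j + 1) (h : y (Sum.inr j) = 1) :
    polarLift n g (y ∘ Equiv.swap (Sum.inl j) (Sum.inl j')) = polarLift n g y := by
  change Ng.quadraticProd g _ = Ng.quadraticProd g _
  rw [polarCoords_comp_swap hj h, Ng.quadraticProd_comp_perm]

theorem polarLift_update_of_eq {g : ℕ} {a : I}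
    (h : Ng.quadratic g (a, (polarCoords y j).2) = Ng.quadratic g (polarCoords y j)) :
    polarLift n g (Function.update y (Sum.inl j) a) = polarLift n g y := by
  change Ng.quadraticProd g _ = Ng.quadraticProd g _
  rw [polarCoords_update, Ng.quadraticProd_update_of_eq h]

theorem polarLift_update_of_eq_neg {g : ℕ} {a : I}
    (h : Ng.quadratic g (a, (polarCoords y j).2) = -Ng.quadratic g (polarCoords y j)) :
    polarLift n g (Function.update y (Sum.inl j) a) = (-1 : ℤˣ) • polarLift n g y := by
  change Ng.quadraticProd g _ = (-1 : ℤˣ) • Ng.quadraticProd g _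
  rw [polarCoords_update, Ng.quadraticProd_update_of_eq_neg h]

theorem symPolar_update {g : ℕ} {a : I} (h : Ng.polar g (a, (polarCoords y j).2) =
    Ng.polar g (polarCoords y j)) :
    symPolar n g (Function.update y (Sum.inl j) a) = symPolar n g y := by
  refine congrArg SP.mk (funext fun k ↦ ?_)
  rw [polarCoords_update]
  rcases eq_or_ne k j with rfl | hk
  · rwa [Function.update_self]
  · rw [Function.update_of_ne hk]

end polarCoords

/-! ### Labellings of the cube -/

open scoped Uniformity in
/-- A labelling of the cube with the symmetries of a labelling pulled back along `symPolar`, except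
that the sign changes across the first edge identification. This is the continuous counterpart of
`IsEquivariantLabelling`. -/
structure IsEquivariantCubeLabelling {n : ℕ} {κ : Type*} (g : ℕ)
    (lab : (Coord n → I) → SignedLabel κ) : Prop where
  seam : ∀ y j, y (Sum.inl j) = 0 → lab (Function.update y (Sum.inl j) 1) = lab y
  center : ∀ y j a, y (Sum.inr j) = 0 → lab (Function.update y (Sum.inl j) a) = lab y
  swap : ∀ y (j j' : Fin n), (j' : ℕ) = j + 1 → y (Sum.inr j) = 1 →
    lab (y ∘ Equiv.swap (Sum.inl j) (Sum.inl j')) = lab y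
  edge_neg : ∀ y (j : Fin n) a, (∀ i, j ≤ i → y (Sum.inr i) = 1) →
    Ng.AreGluedAngles g 0 (y (Sum.inl j)) a →
    lab (Function.update y (Sum.inl j) a) = (lab y).neg
  edge_eq : ∀ y (j : Fin n) a (i : ℕ), (∀ i, j ≤ i → y (Sum.inr i) = 1) → 1 ≤ i →
    Ng.AreGluedAngles g i (y (Sum.inl j)) a → lab (Function.update y (Sum.inl j) a) = lab y
  eventually_eq : ∀ᶠ p in 𝓤 (Coord n → I), (lab p.1).key = (lab p.2).key → lab p.1 = lab p.2

theorem exists_isEquivariantCubeLabelling {n g r : ℕ} (hg : 1 ≤ g) (hr : catLE (SP n (Ng g)) r) :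
    ∃ lab : (Coord n → I) → SignedLabel (Fin (r + 1)), IsEquivariantCubeLabelling g lab := by
  have := Ng.t2Space hg
  obtain ⟨c, hc⟩ := Ng.exists_continuousMap_square_quadraticProd (n := n) hg
  obtain ⟨lab, heq, hneg, hnear⟩ := exists_labelling_of_catLE
    (q := symPolar n g) (Φ := polarLift n g) (fun y ↦ hc (polarCoords y)) hr
  have hupdate (y : Coord n → I) (j : Fin n) (a b c : I) (hy : polarCoords y j = (b, c))
      (hpolar : Ng.polar g (a, c) = Ng.polar g (b, c))
      (hquad : Ng.quadratic g (a, c) = Ng.quadratic g (b, c)) :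
      lab (Function.update y (Sum.inl j) a) = lab y :=
    heq _ _ (symPolar_update (by rwa [hy])).symm (polarLift_update_of_eq (by rwa [hy]))
  refine ⟨lab, ?seam, ?center, ?swap, ?edge_neg, ?edge_eq, hnear⟩
  case seam =>
    intro y j hy
    exact hupdate y j 1 0 _ (Prod.ext hy rfl) ((Ng.isCompatible_polar g).seam _).symm
      (Ng.quadratic_seam hg _).symm
  case center =>
    intro y j a hy
    exact hupdate y j a _ 0 (polarCoords_of_inr_eq_zero hy) ((Ng.isCompatible_polar g).center _ _)
      (Ng.quadratic_center _ _)
  case swap =>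
    intro y j j' hj hy
    exact heq _ _ (symPolar_comp_swap g hj hy).symm (polarLift_comp_swap g hj hy)
  case edge_neg =>
    intro y j a hy ha
    have hj := polarCoords_of_inr_eq_one hy
    exact hneg _ _ (symPolar_update (by rw [hj, Ng.polar_eq_of_areGluedAngles ha])).symm
      (polarLift_update_of_eq_neg (by rw [hj, Ng.quadratic_eq_neg_of_areGluedAngles ha]))
  case edge_eq =>
    intro y j a i hy hi ha
    exact hupdate y j a _ 1 (polarCoords_of_inr_eq_one hy) (Ng.polar_eq_of_areGluedAngles ha).symm
      (Ng.quadratic_eq_of_areGluedAngles hi ha)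

/-! ### Discretisation of the cube -/

/-- The point of `[0, 1]` with abscissa `x / L`, truncated at `1`. -/
def gridPoint (L x : ℕ) : I :=
  ⟨min (x / L : ℝ) 1, le_min (by positivity) zero_le_one, min_le_right _ _⟩

section gridPoint

variable {L : ℕ}

theorem gridPoint_zero (L : ℕ) : gridPoint L 0 = 0 := Subtype.ext (by simp [gridPoint])

theorem gridPoint_self (hL : 0 < L) : gridPoint L L = 1 :=
  Subtype.ext (by simp [gridPoint, hL.ne'])

theorem coe_gridPoint (hL : 0 < L) {x : ℕ} (h : x ≤ L) : (gridPoint L x : ℝ) = x / L :=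
  min_eq_left ((div_le_one (by exact_mod_cast hL)).mpr (by exact_mod_cast h))

theorem dist_gridPoint_le (L : ℕ) {x x' : ℕ} (h : x ≤ x' + 1) (h' : x' ≤ x + 1) :
    dist (gridPoint L x) (gridPoint L x') ≤ 1 / L := by
  have h : (x : ℝ) ≤ x' + 1 := by exact_mod_cast h
  have h' : (x' : ℝ) ≤ x + 1 := by exact_mod_cast h'
  calc dist (gridPoint L x) (gridPoint L x')
      ≤ max |(x / L : ℝ) - x' / L| |(1 : ℝ) - 1| := abs_min_sub_min_le_max _ _ _ _
    _ = |(x : ℝ) - x'| / L := by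
      rw [sub_self, abs_zero, max_eq_left (abs_nonneg _), ← sub_div, abs_div, Nat.abs_cast]
    _ ≤ 1 / L := by
      gcongr
      exact abs_le.mpr ⟨by linarith, by linarith⟩

theorem gridPoint_comp_update {ι : Type*} [DecidableEq ι] (L : ℕ) (w : ι → ℕ) (c : ι) (x : ℕ) :
    gridPoint L ∘ Function.update w c x = Function.update (gridPoint L ∘ w) c (gridPoint L x) :=
  Function.comp_update _ _ _ _

theorem gridPoint_comp_add_single {ι : Type*} [DecidableEq ι] (L : ℕ) (w : ι → ℕ) (c : ι)
    (M : ℕ) : gridPoint L ∘ (w + Pi.single c M) =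
      Function.update (gridPoint L ∘ w) c (gridPoint L (w c + M)) := by
  have : w + Pi.single c M = Function.update w c (w c + M) := by
    ext d
    rcases eq_or_ne d c with rfl | hd <;> simp [*]
  rw [this, gridPoint_comp_update]

theorem areGluedAngles_gridPoint {g M i x : ℕ} (hM : 0 < M) (hi : i < g) (h : 2 * i * M ≤ x)
    (h' : x ≤ (2 * i + 1) * M) :
    Ng.AreGluedAngles g i (gridPoint (2 * g * M) x) (gridPoint (2 * g * M) (x + M)) := by
  have hg : 0 < g := i.zero_le.trans_lt hi
  have hxM : x + M ≤ 2 * g * M := by nlinarith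
  have hx : x ≤ 2 * g * M := by omega
  have hleft : 2 * g * (gridPoint (2 * g * M) x : ℝ) = x / M := by
    rw [coe_gridPoint (by positivity) hx]
    push_cast
    field_simp
  refine ⟨hi, ?_, ?_, ?_⟩
  · rw [hleft, le_div_iff₀ (by positivity)]
    exact_mod_cast h
  · rw [hleft, div_le_iff₀ (by positivity)]
    exact_mod_cast h'
  · rw [hleft, coe_gridPoint (by positivity) hxM]
    push_cast
    field_simp

end gridPoint

theorem IsEquivariantCubeLabelling.exists_isEquivariantLabelling {n g : ℕ} {κ : Type*}
    {lab : (Coord n → I) → SignedLabel κ} (h : IsEquivariantCubeLabelling g lab) (hg : 1 ≤ g) :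
    ∃ M, IsEquivariantLabelling g M fun w : Coord n → ℕ ↦ lab (gridPoint (2 * g * M) ∘ w) := by
  obtain ⟨δ, hδ, hnear⟩ := Metric.mem_uniformity_dist.mp h.eventually_eq
  obtain ⟨M, hM⟩ := exists_nat_gt (1 / δ)
  have hM₀ : 0 < M := Nat.cast_pos.mp ((one_div_pos.mpr hδ).trans hM)
  have hL : 0 < 2 * g * M := by positivity
  have hmesh : 1 / ((2 * g * M : ℕ) : ℝ) < δ := by
    rw [div_lt_comm₀ (by positivity) hδ]
    exact hM.trans_le (Nat.cast_le.mpr (Nat.le_mul_of_pos_left M (by omega)))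
  have hone {w : Coord n → ℕ} {c : Coord n} (hw : w c = 2 * g * M) :
      (gridPoint (2 * g * M) ∘ w) c = 1 := by
    rw [Function.comp_apply, hw, gridPoint_self hL]
  have hzero {w : Coord n → ℕ} {c : Coord n} (hw : w c = 0) :
      (gridPoint (2 * g * M) ∘ w) c = 0 := by
    rw [Function.comp_apply, hw, gridPoint_zero]
  refine ⟨M, ?_, ?_, ?_, ?_, ?_, ?_⟩
  · intro w j hw
    rw [gridPoint_comp_update, gridPoint_self hL, h.seam _ _ (hzero hw)]
  · intro w j x hw
    rw [gridPoint_comp_update, h.center _ _ _ (hzero hw)]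
  · intro w j j' hj hw
    rw [← Function.comp_assoc, h.swap _ _ _ hj (hone hw)]
  · intro w j hw hj
    rw [gridPoint_comp_add_single]
    exact h.edge_neg _ _ _ (fun i hi ↦ hone (hw i hi))
      (areGluedAngles_gridPoint hM₀ hg (by simp) (by simpa using hj))
  · intro w j i hw hi hig hle hle'
    rw [gridPoint_comp_add_single]
    exact h.edge_eq _ _ _ i (fun i hi ↦ hone (hw i hi)) hi
      (areGluedAngles_gridPoint hM₀ hig hle hle')
  · intro u w hu hw
    refine hnear (lt_of_le_of_lt ?_ hmesh)
    exact (dist_pi_le_iff (by positivity)).mpr fun c ↦ dist_gridPoint_le _ (hu c) (hw c)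

theorem two_mul_le_of_catLE {n g r : ℕ} (hg : 1 ≤ g) (hr : catLE (SP n (Ng g)) r) :
    2 * n ≤ r := by
  obtain ⟨lab, hlab⟩ := exists_isEquivariantCubeLabelling hg hr
  obtain ⟨M, hM⟩ := hlab.exists_isEquivariantLabelling hg
  have hcard := hM.two_mul_lt_card hg
  rw [Fintype.card_fin] at hcard
  omega

/-! ### Contractions of open sets in the ambient space -/

/-- `K` restricts to a homotopy from the inclusion of `V` to the constant map with value `v`. As a
total function, `K` can be applied to points not known to lie in `V`. -/
structure IsContractionOn {X : Type*} [TopologicalSpace X] (v : X) (K : I × X → X) (V : Set X) :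
    Prop where
  continuousOn : ContinuousOn K (Set.univ ×ˢ V)
  zero : ∀ x ∈ V, K (0, x) = x
  one : ∀ x ∈ V, K (1, x) = v

namespace IsContractionOn

variable {X : Type*} [TopologicalSpace X] {v : X} {K : I × X → X} {V : Set X}

theorem nullhomotopic (h : IsContractionOn v K V) : (inclMap V).Nullhomotopic :=
  ⟨v, ⟨⟨⟨fun p : I × V ↦ K (p.1, p.2.1), h.continuousOn.comp_continuous (by fun_prop)
    fun p ↦ ⟨trivial, p.2.2⟩⟩, fun x ↦ h.zero x x.2, fun x ↦ h.one x x.2⟩⟩⟩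

theorem continuousAt (h : IsContractionOn v K V) (hV : IsOpen V) (s : I) {x : X} (hx : x ∈ V) :
    ContinuousAt K (s, x) :=
  h.continuousOn.continuousAt ((isOpen_univ.prod hV).mem_nhds ⟨trivial, hx⟩)

theorem exists_of_isQuotientMap {Y : Type*} [TopologicalSpace Y] {q : Y → X}
    (hq : Topology.IsQuotientMap q) (hV : IsOpen V) {Φ : I × Y → X}
    (hcont : ContinuousOn Φ (Set.univ ×ˢ (q ⁻¹' V)))
    (hcongr : ∀ s z w, q z ∈ V → q z = q w → Φ (s, z) = Φ (s, w))
    (hzero : ∀ z, q z ∈ V → Φ (0, z) = q z) (hone : ∀ z, q z ∈ V → Φ (1, z) = v) :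
    ∃ K, IsContractionOn v K V := by
  let rep : X → Y := Function.surjInv hq.surjective
  have hrep (x : X) : q (rep x) = x := Function.surjInv_eq hq.surjective x
  have hrep_congr (s : I) (z : Y) (hz : q z ∈ V) : Φ (s, rep (q z)) = Φ (s, z) :=
    hcongr s _ _ (by rwa [hrep]) (hrep _)
  have hlift : Continuous fun p : I × V ↦ Φ (p.1, rep p.2) := by
    refine (hq.restrictPreimage_isOpen hV).continuous_lift_prod_right ?_
    have : (fun p : I × (q ⁻¹' V) ↦ Φ (p.1, rep (q p.2))) = fun p ↦ Φ (p.1, p.2) :=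
      funext fun p ↦ hrep_congr p.1 p.2 p.2.2
    change Continuous fun p : I × (q ⁻¹' V) ↦ Φ (p.1, rep (q p.2))
    rw [this]
    exact hcont.comp_continuous (by fun_prop) fun p ↦ ⟨trivial, p.2.2⟩
  refine ⟨fun p ↦ Φ (p.1, rep p.2), ?_, fun x hx ↦ ?_, fun x hx ↦ ?_⟩
  · rw [continuousOn_iff_continuous_domRestrict]
    exact hlift.comp (f := fun p : Set.univ ×ˢ V ↦ (p.1.1, ⟨p.1.2, p.2.2⟩)) (by fun_prop)
  · exact (hzero _ (by rwa [hrep])).trans (hrep x)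
  · exact hone _ (by rwa [hrep])

end IsContractionOn

/-! ### Categorical covers of symmetric products -/

section superlevel

variable {κ X : Type*} [Fintype κ] [TopologicalSpace X] {n d : ℕ} {m : κ → C(X, ℝ)} {t t' : ℝ}
  {y : Fin n → X}

/-- The indices of the functions of the family `m` exceeding `t` at `x`. -/
def superlevel (m : κ → C(X, ℝ)) (t : ℝ) (x : X) : Finset κ := {j | t < m j x}

theorem mem_superlevel {x : X} {j : κ} : j ∈ superlevel m t x ↔ t < m j x := by simp [superlevel]

theorem superlevel_anti (h : t ≤ t') (x : X) : superlevel m t' x ⊆ superlevel m t x := fun _ hj ↦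
  mem_superlevel.mpr (h.trans_lt (mem_superlevel.mp hj))

theorem eventually_superlevel_eq {x : X} (h : ∀ j, m j x ≠ t) :
    ∀ᶠ x' in 𝓝 x, (∀ j, m j x' ≠ t) ∧ superlevel m t x' = superlevel m t x := by
  have hside (j : κ) : ∀ᶠ x' in 𝓝 x, m j x' ≠ t ∧ (t < m j x' ↔ t < m j x) := by
    rcases (h j).lt_or_gt with hj | hj
    · filter_upwards [(m j).continuous.continuousAt.eventually_lt_const hj] with x' hx'
      exact ⟨hx'.ne, iff_of_false hx'.not_gt hj.not_gt⟩
    · filter_upwards [(m j).continuous.continuousAt.eventually_const_lt hj] with x' hx'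
      exact ⟨hx'.ne', iff_of_true hx' hj⟩
  filter_upwards [Filter.eventually_all.mpr hside] with x' hx'
  exact ⟨fun j ↦ (hx' j).1, Finset.ext fun j ↦ by simp only [mem_superlevel, (hx' j).2]⟩

/-- The threshold `t` is a value of no function of the family at the points of `y`, and is exceeded
`d` times. -/
structure IsRegularLevel (m : κ → C(X, ℝ)) (t : ℝ) (d : ℕ) (y : Fin n → X) : Prop where
  mem_Ioo : t ∈ Set.Ioo 0 1
  apply_ne : ∀ i j, m j (y i) ≠ t
  sum_card : ∑ i, (superlevel m t (y i)).card = d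

namespace IsRegularLevel

theorem comp_perm (h : IsRegularLevel m t d y) (e : Equiv.Perm (Fin n)) :
    IsRegularLevel m t d (y ∘ e) :=
  ⟨h.mem_Ioo, fun i ↦ h.apply_ne (e i),
    (Equiv.sum_comp e fun i ↦ (superlevel m t (y i)).card).trans h.sum_card⟩

theorem superlevel_eq (h : IsRegularLevel m t d y) (h' : IsRegularLevel m t' d y) (i : Fin n) :
    superlevel m t (y i) = superlevel m t' (y i) := by
  wlog hle : t ≤ t' generalizing t t'
  · exact (this h' h (le_of_not_ge hle)).symm
  have hcard := (Finset.sum_eq_sum_iff_of_le fun i _ ↦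
    Finset.card_le_card (superlevel_anti hle (y i))).mp (h'.sum_card.trans h.sum_card.symm)
  exact (Finset.eq_of_subset_of_card_le (superlevel_anti hle (y i))
    (hcard i (Finset.mem_univ i)).ge).symm

theorem eventually (h : IsRegularLevel m t d y) : ∀ᶠ y' in 𝓝 y,
    IsRegularLevel m t d y' ∧ ∀ i, superlevel m t (y' i) = superlevel m t (y i) := by
  have hcoord (i : Fin n) : ∀ᶠ y' : Fin n → X in 𝓝 y, (∀ j, m j (y' i) ≠ t) ∧
      superlevel m t (y' i) = superlevel m t (y i) :=
    (continuous_apply i).continuousAt.eventually (eventually_superlevel_eq (h.apply_ne i))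
  filter_upwards [Filter.eventually_all.mpr hcoord] with y' hy'
  refine ⟨⟨h.mem_Ioo, fun i ↦ (hy' i).1, ?_⟩, fun i ↦ (hy' i).2⟩
  simp only [(hy' _).2, h.sum_card]

theorem exists_le (m : κ → C(X, ℝ)) (y : Fin n → X) :
    ∃ d ≤ n * Fintype.card κ, ∃ t, IsRegularLevel m t d y := by
  have hfinite : (Set.range fun p : Fin n × κ ↦ m p.2 (y p.1)).Finite := Set.finite_range _
  obtain ⟨t, ht, hne⟩ := (Set.Ioo_infinite (zero_lt_one' ℝ)).exists_notMem_finite hfinite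
  refine ⟨_, ?_, t, ht, fun i j h ↦ hne ⟨(i, j), h⟩, rfl⟩
  exact (Finset.sum_le_card_nsmul _ _ _ fun i _ ↦ Finset.card_le_univ _).trans (by simp)

end IsRegularLevel

open Classical in
/-- The common value of `superlevel m t (y i)` for all thresholds `t` with `IsRegularLevel m t d y`,
and the empty set if there is none. -/
def levelProfile (m : κ → C(X, ℝ)) (d : ℕ) (y : Fin n → X) (i : Fin n) : Finset κ :=
  if h : ∃ t, IsRegularLevel m t d y then superlevel m h.choose (y i) else ∅

theorem levelProfile_eq (h : IsRegularLevel m t d y) (i : Fin n) :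
    levelProfile m d y i = superlevel m t (y i) := by
  have hex : ∃ t, IsRegularLevel m t d y := ⟨t, h⟩
  rw [levelProfile, dif_pos hex, hex.choose_spec.superlevel_eq h]

/-- The tuples for which some threshold is exceeded `d` times. -/
def levelSet (m : κ → C(X, ℝ)) (d n : ℕ) : Set (Fin n → X) := {y | ∃ t, IsRegularLevel m t d y}

theorem isOpen_levelSet : IsOpen (levelSet m d n) :=
  isOpen_iff_mem_nhds.mpr fun _ ⟨t, ht⟩ ↦ ht.eventually.mono fun _ h ↦ ⟨t, h.1⟩

theorem preimage_mk_image_levelSet :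
    (SP.mk : (Fin n → X) → SP n X) ⁻¹' (SP.mk '' levelSet m d n) = levelSet m d n := by
  refine Set.Subset.antisymm ?_ (Set.subset_preimage_image _ _)
  rintro y ⟨y', ⟨t, ht⟩, hmk⟩
  obtain ⟨e, rfl⟩ := SP.mk_eq_mk_iff.mp hmk
  exact ⟨t, ht.comp_perm e⟩

/-- The contraction moving each point of a tuple by the contraction of the family `K` that its
superlevel set selects. -/
def levelContraction (m : κ → C(X, ℝ)) (K : Finset κ → I × X → X) (d : ℕ)
    (p : I × (Fin n → X)) (i : Fin n) : X :=
  K (levelProfile m d p.2 i) (p.1, p.2 i)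

theorem levelContraction_comp_perm {K : Finset κ → I × X → X} (hy : y ∈ levelSet m d n) (s : I)
    (e : Equiv.Perm (Fin n)) :
    levelContraction m K d (s, y ∘ e) = levelContraction m K d (s, y) ∘ e := by
  obtain ⟨t, ht⟩ := hy
  funext i
  simp only [levelContraction, Function.comp_apply, levelProfile_eq ht,
    levelProfile_eq (ht.comp_perm e)]

variable {v : X} {V : Finset κ → Set X} {K : Finset κ → I × X → X}

theorem continuousOn_levelContraction (hV : ∀ A, IsOpen (V A))
    (hK : ∀ A, IsContractionOn v (K A) (V A))
    (hmem : ∀ t ∈ Set.Ioo (0 : ℝ) 1, ∀ x, (∀ j, m j x ≠ t) → x ∈ V (superlevel m t x)) :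
    ContinuousOn (levelContraction m K d) (Set.univ ×ˢ levelSet m d n) := by
  rintro ⟨s, y⟩ ⟨-, t, ht⟩
  refine (continuousAt_pi.mpr fun i ↦ ?_).continuousWithinAt
  have hKi : ContinuousAt (fun p : I × (Fin n → X) ↦
      K (superlevel m t (y i)) (p.1, p.2 i)) (s, y) :=
    ContinuousAt.comp (f := fun p : I × (Fin n → X) ↦ (p.1, p.2 i)) (x := (s, y))
      ((hK _).continuousAt (hV _) s (hmem t ht.mem_Ioo _ (ht.apply_ne i)))
      (by fun_prop)
  refine hKi.congr ?_
  filter_upwards [(continuous_snd.tendsto (s, y)).eventually ht.eventually] with p hp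
  rw [levelContraction, levelProfile_eq hp.1, hp.2]

theorem SP.exists_isContractionOn_image_levelSet (hV : ∀ A, IsOpen (V A))
    (hK : ∀ A, IsContractionOn v (K A) (V A))
    (hmem : ∀ t ∈ Set.Ioo (0 : ℝ) 1, ∀ x, (∀ j, m j x ≠ t) → x ∈ V (superlevel m t x)) :
    ∃ L, IsContractionOn (SP.mk fun _ ↦ v) L (SP.mk '' levelSet m d n : Set (SP n X)) := by
  have hopen : IsOpen (SP.mk '' levelSet m d n : Set (SP n X)) :=
    isOpenQuotientMap_mk.isOpenMap _ isOpen_levelSet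
  have hlevel {y : Fin n → X}
      (hy : SP.mk y ∈ (SP.mk '' levelSet m d n : Set (SP n X))) : y ∈ levelSet m d n := by
    rwa [← Set.mem_preimage, preimage_mk_image_levelSet] at hy
  refine IsContractionOn.exists_of_isQuotientMap isQuotientMap_mk hopen
    (Φ := SP.mk ∘ levelContraction m K d) ?cont ?congr ?zero ?one
  case cont =>
    rw [preimage_mk_image_levelSet]
    exact isQuotientMap_mk.continuous.comp_continuousOn
      (continuousOn_levelContraction hV hK hmem)
  case congr =>
    intro s z w hz hzw
    obtain ⟨e, rfl⟩ := mk_eq_mk_iff.mp hzw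
    exact mk_eq_mk_iff.mpr ⟨e, (levelContraction_comp_perm (hlevel hz) s e).symm⟩
  case zero =>
    intro y hy
    obtain ⟨t, ht⟩ := hlevel hy
    refine congrArg SP.mk (funext fun i ↦ ?_)
    rw [levelContraction, levelProfile_eq ht]
    exact (hK _).zero _ (hmem t ht.mem_Ioo _ (ht.apply_ne i))
  case one =>
    intro y hy
    obtain ⟨t, ht⟩ := hlevel hy
    refine congrArg SP.mk (funext fun i ↦ ?_)
    rw [levelContraction, levelProfile_eq ht]
    exact (hK _).one _ (hmem t ht.mem_Ioo _ (ht.apply_ne i))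

/-- For each tuple of points of `X` some threshold splits the values of the family `m`; the number
of values above the threshold indexes the cover of the symmetric product. -/
theorem SP.catLE_of_superlevel (n : ℕ) (m : κ → C(X, ℝ)) (v : X)
    (h : ∀ A : Finset κ, ∃ V K, IsOpen V ∧ IsContractionOn v K V ∧ ∀ t ∈ Set.Ioo (0 : ℝ) 1, ∀ x,
      (∀ j, m j x ≠ t) → superlevel m t x = A → x ∈ V) :
    catLE (SP n X) (n * Fintype.card κ) := by
  choose V K hV hK hmem using h
  refine ⟨fun d ↦ SP.mk '' levelSet m d n, fun d ↦ isOpenQuotientMap_mk.isOpenMap _ isOpen_levelSet,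
    Set.eq_univ_iff_forall.mpr fun ξ ↦ ?_, fun d ↦ ?_⟩
  swap
  · obtain ⟨L, hL⟩ := exists_isContractionOn_image_levelSet (d := d) hV hK
      fun t ht x hx ↦ hmem _ t ht x hx rfl
    exact hL.nullhomotopic
  obtain ⟨y, rfl⟩ := isQuotientMap_mk.surjective ξ
  obtain ⟨d, hd, ht⟩ := IsRegularLevel.exists_le m y
  exact Set.mem_iUnion.mpr ⟨⟨d, Nat.lt_succ_of_le hd⟩, y, ht, rfl⟩

end superlevel

/-! ### A categorical cover of the surface -/

namespace nonorientRel

variable {g : ℕ} {z w : Disc}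

theorem pow_eq (h : nonorientRel g z w) :
    (z : ℂ) ^ (2 * g) = (w : ℂ) ^ (2 * g) := by
  obtain ⟨j, t, -, -, hz, hw⟩ := h
  have := j.pos
  rw [hz, hw, polyBP_eq_turn, polyBP_eq_turn, turn_pow, turn_pow,
    mul_div_cancel₀ _ (by positivity), mul_div_cancel₀ _ (by positivity), turn_eq_turn_iff]
  exact ⟨-1, by push_cast; ring⟩

theorem norm_eq_one (h : nonorientRel g z w) : ‖(z : ℂ)‖ = 1 := by
  obtain ⟨j, t, -, -, hz, -⟩ := h
  rw [hz, polyBP_eq_turn, norm_turn]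

end nonorientRel

namespace Ng

variable {g : ℕ}

/-- The map from the surface to the unit disc wrapping each edge of the polygon once around the
circle. -/
def power (g : ℕ) : C(Ng g, ℂ) where
  toFun := Quot.lift (fun z ↦ (z : ℂ) ^ (2 * g)) fun _ _ ↦ nonorientRel.pow_eq
  continuous_toFun := continuous_quot_lift _ (by fun_prop)

theorem power_mk (z : Disc) : power g (mk g z) = (z : ℂ) ^ (2 * g) := rfl

theorem eq_vertex_of_power_eq_one (hg : 1 ≤ g) {x : Ng g} (h : power g x = 1) : x = vertex g := by
  obtain ⟨⟨a, b⟩, rfl⟩ := (isQuotientMap_polar g).surjective x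
  change (Disc.polar (a, b) : ℂ) ^ (2 * g) = 1 at h
  have hb : b = 1 := by
    have hnorm := congrArg norm h
    rw [norm_pow, Disc.norm_polar, norm_one] at hnorm
    exact Subtype.ext ((pow_eq_one_iff_of_nonneg b.2.1 (by omega)).mp hnorm)
  subst hb
  refine polar_eq_vertex_of_turn_eq_one hg ?_
  simpa [Disc.coe_polar, turn_pow] using h

theorem exists_isContractionOn_preimage_power (hg : 1 ≤ g) {D : Set ℂ} (hD : IsOpen D)
    {Φ : I × Disc → Disc}
    (hcont : ContinuousOn Φ {p | (p.2 : ℂ) ^ (2 * g) ∈ D})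
    (hrel : ∀ (s : I) (z w : Disc), (z : ℂ) ^ (2 * g) ∈ D → nonorientRel g z w →
      nonorientRel g (Φ (s, z)) (Φ (s, w)))
    (hzero : ∀ z : Disc, (z : ℂ) ^ (2 * g) ∈ D → Φ (0, z) = z)
    (hone : ∀ z : Disc, (z : ℂ) ^ (2 * g) ∈ D → (Φ (1, z) : ℂ) ^ (2 * g) = 1) :
    ∃ K, IsContractionOn (vertex g) K (power g ⁻¹' D) := by
  classical
  refine IsContractionOn.exists_of_isQuotientMap (isQuotientMap_mk g)
    (hD.preimage (power g).continuous) (Φ := mk g ∘ Φ) ?_ ?_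
    (fun z hz ↦ congrArg (mk g) (hzero z hz)) fun z hz ↦ eq_vertex_of_power_eq_one hg (hone z hz)
  · exact (continuous_mk g).comp_continuousOn (hcont.mono fun p hp ↦ hp.2)
  · intro s z w hz hzw
    let F (z : Disc) : Ng g := if (z : ℂ) ^ (2 * g) ∈ D then mk g (Φ (s, z)) else vertex g
    have hF (z w : Disc) (h : nonorientRel g z w) : F z = F w := by
      simp only [F, h.pow_eq]
      split_ifs with hw
      · exact Quot.sound (hrel s z w (h.pow_eq ▸ hw) h)
      · rfl
    have hw : (w : ℂ) ^ (2 * g) ∈ D := by rwa [← power_mk, ← hzw]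
    calc mk g (Φ (s, z)) = F z := (if_pos hz).symm
      _ = F w := congrArg (Quot.lift F hF) hzw
      _ = mk g (Φ (s, w)) := if_pos hw

theorem exists_isContractionOn_power_mem_ball (hg : 1 ≤ g) :
    ∃ K, IsContractionOn (vertex g) K (power g ⁻¹' Metric.ball 0 1) := by
  let Φ (p : I × Disc) : Disc :=
    ⟨AffineMap.lineMap (p.2 : ℂ) 1 (p.1 : ℝ), by
      have h := (convex_closedBall (0 : ℂ) 1).lineMap_mem (x := p.2) (y := 1)
        (by simpa using p.2.2) (by simp) p.1.2
      simpa using h⟩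
  have hΦ : Continuous Φ := by
    refine Continuous.subtype_mk ?_ _
    simp only [AffineMap.lineMap_apply_module]
    fun_prop
  refine exists_isContractionOn_preimage_power hg Metric.isOpen_ball (Φ := Φ) hΦ.continuousOn
    (fun s z w hz h ↦ ?_) (fun z _ ↦ Subtype.ext ?_) fun z _ ↦ ?_
  · simp [h.norm_eq_one] at hz
  · simp [Φ]
  · simp [Φ]

/-- The angle function `τ` on `D`, measured in full turns, is a continuous branch of the argument
and differs by less than a full turn from the representative of the argument in `[0, 1]`. -/
structure IsAngleOn (τ : ℂ → ℝ) (D : Set ℂ) : Prop where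
  ne_zero : ∀ u ∈ D, u ≠ 0
  continuousAt : ∀ u ∈ D, ContinuousAt τ u
  mem_Ioo : ∀ u ∈ D, τ u ∈ Set.Ioo (-1) 1
  norm_mul_turn : ∀ u ∈ D, (‖u‖ : ℂ) * turn (τ u) = u

/-- The homotopy of the disc that moves `z` outwards to the boundary circle while rotating it by
`-τ (z ^ N) / N` of a full turn. -/
def rotation (N : ℕ) (τ : ℂ → ℝ) (p : I × Disc) : Disc :=
  ⟨p.2 * (AffineMap.lineMap 1 ‖(p.2 : ℂ)‖⁻¹ (p.1 : ℝ) : ℝ) *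
    turn (-(p.1 * τ ((p.2 : ℂ) ^ N)) / N), by
    obtain ⟨⟨s, hs₀, hs₁⟩, z, hz⟩ := p
    have hnonneg : 0 ≤ 1 - s + s * ‖z‖⁻¹ := add_nonneg (by linarith) (by positivity)
    rw [AffineMap.lineMap_apply_module, norm_mul, norm_turn, mul_one, norm_mul, Complex.norm_real,
      smul_eq_mul, mul_one, smul_eq_mul, Real.norm_of_nonneg hnonneg]
    rcases eq_or_ne z 0 with rfl | hz₀
    · simp
    · rw [mul_add, mul_left_comm, mul_inv_cancel₀ (norm_ne_zero_iff.mpr hz₀)]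
      nlinarith⟩

theorem coe_rotation (N : ℕ) (τ : ℂ → ℝ) (s : I) (z : Disc) : (rotation N τ (s, z) : ℂ) =
    z * (AffineMap.lineMap 1 ‖(z : ℂ)‖⁻¹ (s : ℝ) : ℝ) * turn (-(s * τ ((z : ℂ) ^ N)) / N) := rfl

theorem coe_rotation_of_eq_turn (N : ℕ) (τ : ℂ → ℝ) (s : I) {z : Disc} {x : ℝ}
    (hz : (z : ℂ) = turn x) :
    (rotation N τ (s, z) : ℂ) = turn (x - s * τ ((z : ℂ) ^ N) / N) := by
  have hnorm : ‖(z : ℂ)‖ = 1 := by rw [hz, norm_turn]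
  rw [coe_rotation, hnorm, inv_one, AffineMap.lineMap_same_apply, Complex.ofReal_one, mul_one,
    neg_div, sub_eq_add_neg, turn_add, hz]

theorem rotation_zero (N : ℕ) (τ : ℂ → ℝ) (z : Disc) : rotation N τ (0, z) = z :=
  Subtype.ext (by simp [coe_rotation])

theorem rotation_one_pow {N : ℕ} (hN : N ≠ 0) {τ : ℂ → ℝ} {z : Disc} (hz : (z : ℂ) ^ N ≠ 0)
    (hτ : (‖(z : ℂ) ^ N‖ : ℂ) * turn (τ ((z : ℂ) ^ N)) = (z : ℂ) ^ N) :
    (rotation N τ (1, z) : ℂ) ^ N = 1 := by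
  have hnorm : (‖(z : ℂ) ^ N‖ : ℂ) ≠ 0 := by simpa using hz
  have hN' : (N : ℝ) ≠ 0 := by exact_mod_cast hN
  calc (rotation N τ (1, z) : ℂ) ^ N
      = (z : ℂ) ^ N * (‖(z : ℂ) ^ N‖ : ℂ)⁻¹ * turn (-τ ((z : ℂ) ^ N)) := by
        simp [coe_rotation, mul_pow, turn_pow, mul_div_cancel₀ _ hN']
    _ = (‖(z : ℂ) ^ N‖ : ℂ) * (‖(z : ℂ) ^ N‖ : ℂ)⁻¹ *
          (turn (τ ((z : ℂ) ^ N)) * turn (-τ ((z : ℂ) ^ N))) := by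
        nth_rw 1 [← hτ]
        ring
    _ = 1 := by
        rw [mul_inv_cancel₀ hnorm, ← turn_add, add_neg_cancel, turn_zero, one_mul]

theorem continuousAt_rotation {N : ℕ} {τ : ℂ → ℝ} (s : I) {z : Disc} (hz : (z : ℂ) ≠ 0)
    (hτ : ContinuousAt τ ((z : ℂ) ^ N)) : ContinuousAt (rotation N τ) (s, z) := by
  have hinv : ContinuousAt (fun p : I × Disc ↦ ‖(p.2 : ℂ)‖⁻¹) (s, z) :=
    ContinuousAt.inv₀ (by fun_prop) (norm_ne_zero_iff.mpr hz)
  refine Topology.IsInducing.subtypeVal.continuousAt_iff.mpr ?_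
  unfold rotation
  simp only [Function.comp_def, AffineMap.lineMap_apply_module]
  fun_prop

theorem sub_mul_mem_Icc_of_turn_eq {t θ : ℝ} (ht : t ∈ Set.Icc 0 1) (hθ : θ ∈ Set.Ioo (-1) 1)
    (h : turn θ = turn t) (s : I) : t - s * θ ∈ Set.Icc (0 : ℝ) 1 := by
  obtain ⟨m, hm⟩ := turn_eq_turn_iff.mp h
  obtain ⟨ht₀, ht₁⟩ := ht
  obtain ⟨hs₀, hs₁⟩ := s.2
  have h₁ : -2 < m := by
    rify
    linarith [hθ.1]
  have h₂ : m < 1 := by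
    rify
    linarith [hθ.2]
  obtain rfl | rfl : m = -1 ∨ m = 0 := by omega
  all_goals
    push_cast at hm
    rw [hm]
    constructor <;> nlinarith

theorem nonorientRel_rotation {τ : ℂ → ℝ} {D : Set ℂ} (hτ : IsAngleOn τ D) (s : I) {z w : Disc}
    (hz : (z : ℂ) ^ (2 * g) ∈ D) (h : nonorientRel g z w) :
    nonorientRel g (rotation (2 * g) τ (s, z)) (rotation (2 * g) τ (s, w)) := by
  have hpow := h.pow_eq
  have hnorm := h.norm_eq_one
  obtain ⟨j, t, ht₀, ht₁, hz', hw'⟩ := h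
  rw [polyBP_eq_turn] at hz' hw'
  have hg : ((2 * g : ℕ) : ℝ) ≠ 0 := by
    have := j.pos
    positivity
  have hturn : turn (τ ((z : ℂ) ^ (2 * g))) = turn t := by
    have hu := hτ.norm_mul_turn _ hz
    rw [norm_pow, hnorm, one_pow, Complex.ofReal_one, one_mul] at hu
    rw [hu, hz', turn_pow, mul_div_cancel₀ _ hg, turn_add, turn_natCast, one_mul]
  obtain ⟨h₀, h₁⟩ := sub_mul_mem_Icc_of_turn_eq ⟨ht₀, ht₁⟩ (hτ.mem_Ioo _ hz) hturn s
  refine ⟨j, _, h₀, h₁, ?_, ?_⟩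
  · rw [coe_rotation_of_eq_turn _ _ _ hz', polyBP_eq_turn, ← sub_div, add_sub_assoc]
  · rw [coe_rotation_of_eq_turn _ _ _ hw', polyBP_eq_turn, ← sub_div, add_sub_assoc, hpow]

theorem exists_isContractionOn_of_isAngleOn (hg : 1 ≤ g) {τ : ℂ → ℝ} {D : Set ℂ}
    (hτ : IsAngleOn τ D) (hD : IsOpen D) :
    ∃ K, IsContractionOn (vertex g) K (power g ⁻¹' D) := by
  have hg' : 2 * g ≠ 0 := by omega
  refine exists_isContractionOn_preimage_power hg hD (Φ := rotation (2 * g) τ) ?_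
    (fun s _ _ ↦ nonorientRel_rotation hτ s) (fun z _ ↦ rotation_zero _ _ z)
    fun z hz ↦ rotation_one_pow hg' (hτ.ne_zero _ hz) (hτ.norm_mul_turn _ hz)
  rintro ⟨s, z⟩ hz
  exact (continuousAt_rotation s (pow_ne_zero_iff hg' |>.mp (hτ.ne_zero _ hz))
    (hτ.continuousAt _ hz)).continuousWithinAt

theorem abs_arg_div_two_pi_lt {u : ℂ} (hu : u ∈ Complex.slitPlane) :
    |u.arg / (2 * Real.pi)| < 1 / 2 := by
  rw [abs_div, abs_of_pos Real.two_pi_pos, div_lt_iff₀ (by positivity)]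
  have := abs_lt.mpr ⟨u.neg_pi_lt_arg, u.arg_le_pi.lt_of_ne (Complex.slitPlane_arg_ne_pi hu)⟩
  linarith

theorem isAngleOn_slitPlane :
    IsAngleOn (fun u ↦ u.arg / (2 * Real.pi)) Complex.slitPlane where
  ne_zero _ hu := Complex.slitPlane_ne_zero hu
  continuousAt _ hu := (Complex.continuousAt_arg hu).div_const _
  mem_Ioo _ hu := abs_lt.mp ((abs_arg_div_two_pi_lt hu).trans (by norm_num))
  norm_mul_turn u _ := norm_mul_turn_arg u

theorem isAngleOn_neg_slitPlane :
    IsAngleOn (fun u ↦ (-u).arg / (2 * Real.pi) + 1 / 2) (-Complex.slitPlane) where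
  ne_zero _ hu := neg_ne_zero.mp (Complex.slitPlane_ne_zero hu)
  continuousAt u hu :=
    (((Complex.continuousAt_arg hu).comp continuous_neg.continuousAt).div_const _).add_const _
  mem_Ioo u hu := by
    have h := abs_lt.mp (abs_arg_div_two_pi_lt hu)
    constructor <;> linarith [h.1, h.2]
  norm_mul_turn u _ := by rw [turn_add_half, mul_neg, ← norm_neg, norm_mul_turn_arg, neg_neg]

/-! ### The upper bound -/

/-- The functions on the plane whose composites with `power` are the height functions of the cover:
the distance from `u` to `‖u‖`, which detects the nonnegative axis, and the scaled distance to the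
unit circle. -/
def height (j : Bool) : C(ℂ, ℝ) :=
  if j then ⟨fun u ↦ 2 * (1 - ‖u‖), by fun_prop⟩ else ⟨fun u ↦ ‖u - ‖u‖‖, by fun_prop⟩

open scoped ComplexOrder in
theorem eq_neg_norm_of_notMem_slitPlane {u : ℂ} (h : u ∉ Complex.slitPlane) : u = -‖u‖ := by
  rw [Complex.mem_slitPlane_iff_not_le_zero, not_not] at h
  rw [← norm_neg, ← Complex.eq_coe_norm_of_nonneg (neg_nonneg.mpr h), neg_neg]

theorem mem_ball_of_height_pos {u : ℂ} (h : 0 < height true u) : u ∈ Metric.ball 0 1 := by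
  have h : 0 < 2 * (1 - ‖u‖) := h
  rw [mem_ball_zero_iff]
  linarith

theorem mem_neg_slitPlane_of_height_pos {u : ℂ} (h : 0 < height false u) :
    u ∈ -Complex.slitPlane := by
  by_contra hu
  have hu := eq_neg_norm_of_notMem_slitPlane hu
  rw [norm_neg, neg_inj] at hu
  have h : 0 < ‖u - ‖u‖‖ := h
  rw [← hu] at h
  simp at h

theorem mem_slitPlane_of_height_lt_one {u : ℂ} (h₀ : height false u < 1)
    (h₁ : height true u < 1) : u ∈ Complex.slitPlane := by
  by_contra hu
  have h₀ : ‖u - ‖u‖‖ < 1 := h₀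
  have h₁ : 2 * (1 - ‖u‖) < 1 := h₁
  have hdouble : u - ‖u‖ = -(2 * ‖u‖ : ℝ) := by
    nth_rw 1 [eq_neg_norm_of_notMem_slitPlane hu]
    push_cast
    ring
  rw [hdouble, norm_neg, Complex.norm_real, Real.norm_of_nonneg (by positivity)] at h₀
  linarith

theorem catLE_two_mul (n : ℕ) (hg : 1 ≤ g) : catLE (SP n (Ng g)) (2 * n) := by
  suffices catLE (SP n (Ng g)) (n * Fintype.card Bool) by rwa [Fintype.card_bool, mul_comm] at this
  refine SP.catLE_of_superlevel n (fun j ↦ (height j).comp (power g)) (vertex g) fun A ↦ ?_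
  by_cases htrue : true ∈ A
  · obtain ⟨K, hK⟩ := exists_isContractionOn_power_mem_ball hg
    refine ⟨_, K, Metric.isOpen_ball.preimage (power g).continuous, hK, ?_⟩
    rintro t ht x - rfl
    exact mem_ball_of_height_pos (ht.1.trans (mem_superlevel.mp htrue))
  by_cases hfalse : false ∈ A
  · have hopen : IsOpen (-Complex.slitPlane) := Complex.isOpen_slitPlane.neg
    obtain ⟨K, hK⟩ := exists_isContractionOn_of_isAngleOn hg isAngleOn_neg_slitPlane hopen
    refine ⟨_, K, hopen.preimage (power g).continuous, hK, ?_⟩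
    rintro t ht x - rfl
    exact mem_neg_slitPlane_of_height_pos (ht.1.trans (mem_superlevel.mp hfalse))
  · obtain ⟨K, hK⟩ := exists_isContractionOn_of_isAngleOn hg isAngleOn_slitPlane
      Complex.isOpen_slitPlane
    refine ⟨_, K, Complex.isOpen_slitPlane.preimage (power g).continuous, hK, ?_⟩
    rintro t ht x - rfl
    rw [mem_superlevel, not_lt] at htrue hfalse
    exact mem_slitPlane_of_height_lt_one (hfalse.trans_lt ht.2) (htrue.trans_lt ht.2)

end Ng

/-- **Theorem B.** For `n, g ≥ 1`, `cat(SPⁿ(N_g)) = 2n`. -/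
theorem LScat_SP_nonorientableSurface (n g : ℕ) (hn : 1 ≤ n) (hg : 1 ≤ g) :
    LScat (SP n (Ng g)) = ((2 * n : ℕ) : ℕ∞) := by
  apply le_antisymm
  · exact sInf_le ⟨2 * n, Ng.catLE_two_mul n hg, rfl⟩
  · refine le_sInf ?_
    rintro _ ⟨r, hr, rfl⟩
    exact_mod_cast two_mul_le_of_catLE hg hr

end
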